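/- arXiv:gr-qc/9809054 — 3 statements merged into one kernel-verified Lean document; each statement's English description precedes it below -/
import Mathlib

section
/- Let f : ℝ² → ℝ be smooth, (ρ_ε)_{ε∈(0,1)} a generalized delta net, x_ε (ε < ε₀) the solutions of ẍ_ε = ½ ∇f(x_ε) ρ_ε with x_ε(−1) = x₀, ẋ_ε(−1) = ẋ₀, and v_ε the solutions of v̈_ε = f(x_ε) ρ̇_ε + 2 ∇f(x_ε)·ẋ_ε ρ_ε with v_ε(−1) = v₀, v̇_ε(−1) = v̇₀. Write x̂ := x₀ + ẋ₀. Then v_ε converges distributionally to v₀ + v̇₀(1+u) + f(x̂) θ(u) + [Σ_{i=1}^{2} ∂_i f(x̂)(ẋ₀^i + ¼ ∂_i f(x̂))] u₊: for every smooth compactly supported φ : ℝ → ℝ, ∫_ℝ v_ε(u) φ(u) du → ∫_ℝ (v₀ + v̇₀(1+u)) φ(u) du + f(x̂) ∫_0^∞ φ(u) du + [Σ_i ∂_i f(x̂)(ẋ₀^i + ¼ ∂_i f(x̂))] ∫_0^∞ u φ(u) du as ε → 0; i.e. the geodesic suffers a jump of magnitude f(x̂) and a kink in the v-direction at the shock.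 -/
open MeasureTheory Filter Set

/-- A generalized delta net: a family `(ρ ε)_{ε ∈ (0,1)}` of smooth functions with
(a') `supp ρ_ε ⊆ [-ε, ε]`, (b) `∫ ρ_ε → 1` as `ε → 0`, and (c) `∫ |ρ_ε|` uniformly bounded. -/
def IsGenDeltaNet (ρ : ℝ → ℝ → ℝ) : Prop :=
  (∀ ε ∈ Ioo (0:ℝ) 1, ContDiff ℝ (⊤ : ℕ∞) (ρ ε)) ∧
  (∀ ε ∈ Ioo (0:ℝ) 1, Function.support (ρ ε) ⊆ Icc (-ε) ε) ∧
  Tendsto (fun ε => ∫ x, ρ ε x) (nhdsWithin 0 (Ioo 0 1)) (nhds 1) ∧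
  ∃ C : ℝ, ∀ ε ∈ Ioo (0:ℝ) 1, (∫ x, |ρ ε x|) ≤ C

/-- The gradient of a function on `ℝ²`. -/
noncomputable def grad2 (f : ℝ × ℝ → ℝ) (p : ℝ × ℝ) : ℝ × ℝ :=
  (fderiv ℝ f p (1, 0), fderiv ℝ f p (0, 1))

/-- The Euclidean dot product on `ℝ²`. -/
def dot2 (a b : ℝ × ℝ) : ℝ := a.1 * b.1 + a.2 * b.2

/-- `x` is the (smooth, globally defined) solution of the regularized transverse geodesic
system `ẍ(u) = ½ ∇f(x(u)) ρ_ε(u)` with data `x(-1) = x₀`, `ẋ(-1) = xdot0`. -/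
def IsXSol (f : ℝ × ℝ → ℝ) (ρ : ℝ → ℝ → ℝ) (x₀ xdot0 : ℝ × ℝ) (ε : ℝ) (x : ℝ → ℝ × ℝ) : Prop :=
  ContDiff ℝ (⊤ : ℕ∞) x ∧ (∀ u, deriv (deriv x) u = (ρ ε u / 2) • grad2 f (x u)) ∧
  x (-1) = x₀ ∧ deriv x (-1) = xdot0

/-- `v` is the (smooth, globally defined) solution of the regularized `v`-equation
`v̈(u) = f(x(u)) ρ̇_ε(u) + 2 ∇f(x(u))·ẋ(u) ρ_ε(u)` with data `v(-1) = v₀`, `v̇(-1) = vdot0`. -/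
def IsVSol (f : ℝ × ℝ → ℝ) (ρ : ℝ → ℝ → ℝ) (x : ℝ → ℝ × ℝ) (v₀ vdot0 : ℝ) (ε : ℝ)
    (v : ℝ → ℝ) : Prop :=
  ContDiff ℝ (⊤ : ℕ∞) v ∧
  (∀ u, deriv (deriv v) u =
    f (x u) * deriv (ρ ε) u + 2 * dot2 (grad2 f (x u)) (deriv x u) * ρ ε u) ∧
  v (-1) = v₀ ∧ deriv v (-1) = vdot0

open scoped Topology

section Kernel

variable {E : Type*} [NormedAddCommGroup E] [NormedSpace ℝ E]

theorem eq_add_integral_deriv [CompleteSpace E] {y : ℝ → E} (hy : ContDiff ℝ 1 y) (a u : ℝ) :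
    y u = y a + ∫ s in a..u, deriv y s := by
  rw [intervalIntegral.integral_deriv_eq_sub
    (fun t _ => (hy.differentiable one_ne_zero).differentiableAt)
    ((hy.continuous_deriv le_rfl).intervalIntegrable _ _)]
  abel

theorem integrable_of_support_subset_Icc {r : ℝ → ℝ} {ε : ℝ} (hr : Continuous r)
    (hs : Function.support r ⊆ Icc (-ε) ε) : Integrable r :=
  hr.integrable_of_hasCompactSupport
    (HasCompactSupport.intro isCompact_Icc fun t ht => by
      by_contra h
      exact ht (hs h))

/-- An interval integral against a kernel supported in `[-ε, ε]` is controlled by the values of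
the integrand on the support. -/
theorem norm_integral_smul_le {r : ℝ → ℝ} {ε M a b : ℝ} (hr : Continuous r)
    (hs : Function.support r ⊆ Icc (-ε) ε) (hM : 0 ≤ M) {w : ℝ → E}
    (hw : ∀ s ∈ uIoc a b, s ∈ Icc (-ε) ε → ‖w s‖ ≤ M) :
    ‖∫ s in a..b, r s • w s‖ ≤ M * ∫ s, |r s| := by
  have hint : Integrable fun s => M * |r s| :=
    ((integrable_of_support_subset_Icc hr hs).abs).const_mul M
  calc ‖∫ s in a..b, r s • w s‖ = ‖∫ s in uIoc a b, r s • w s‖ :=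
        intervalIntegral.norm_intervalIntegral_eq _ _ _ _
    _ ≤ ∫ s in uIoc a b, M * |r s| := by
        refine norm_integral_le_of_norm_le hint.integrableOn ?_
        refine (ae_restrict_iff' measurableSet_uIoc).2 (Eventually.of_forall fun s hsab => ?_)
        by_cases h0 : r s = 0
        · simp [h0]
        · rw [norm_smul, mul_comm, Real.norm_eq_abs]
          exact mul_le_mul_of_nonneg_right (hw s hsab (hs h0)) (abs_nonneg _)
    _ ≤ ∫ s, M * |r s| :=
        setIntegral_le_integral hint (Eventually.of_forall fun s => by positivity)
    _ = M * ∫ s, |r s| := integral_const_mul _ _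

theorem integral_smul_eq_zero_of_lt {r : ℝ → ℝ} {ε u : ℝ} (hr : Continuous r)
    (hs : Function.support r ⊆ Icc (-ε) ε) (hε : ε < 1) (hu : u < -ε) (w : ℝ → E) :
    ∫ s in (-1)..u, r s • w s = 0 := by
  rw [← norm_le_zero_iff, ← zero_mul (∫ s, |r s|)]
  refine norm_integral_smul_le hr hs le_rfl fun s hsu hsε => ?_
  have h1 : s ≤ max (-1) u := hsu.2
  have h2 : max (-1) u < -ε := max_lt (by linarith) hu
  linarith [hsε.1]

end Kernel

section DeltaNet

variable {E : Type*} [NormedAddCommGroup E] [NormedSpace ℝ E] [CompleteSpace E]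

/-- A generalized delta net, tested against functions that become uniformly close to `c` on the
support of the net, picks out `c`. -/
theorem IsGenDeltaNet.tendsto_integral_smul {ρ : ℝ → ℝ → ℝ} (hρ : IsGenDeltaNet ρ) {ε₀ : ℝ}
    (hε₀ : ε₀ ∈ Ioo (0 : ℝ) 1) {w : ℝ → ℝ → E} {c : E}
    (hwc : ∀ ε ∈ Ioo 0 ε₀, Continuous (w ε))
    (hw : ∀ δ > 0, ∀ᶠ ε in 𝓝[Ioo 0 ε₀] 0, ∀ s ∈ Icc (-ε) ε, ‖w ε s - c‖ ≤ δ)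
    {u : ℝ} (hu : 0 < u) :
    Tendsto (fun ε => ∫ s in (-1)..u, ρ ε s • w ε s) (𝓝[Ioo 0 ε₀] 0) (𝓝 c) := by
  obtain ⟨hsm, hsupp, hlim, C, hC⟩ := hρ
  have hsub : Ioo 0 ε₀ ⊆ Ioo (0 : ℝ) 1 := Ioo_subset_Ioo_right hε₀.2.le
  have hC0 : 0 ≤ C := (integral_nonneg fun s => abs_nonneg _).trans (hC ε₀ hε₀)
  have hmem : ∀ᶠ ε in 𝓝[Ioo 0 ε₀] (0 : ℝ), ε ∈ Ioo 0 ε₀ := self_mem_nhdsWithin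
  have hlt : ∀ᶠ ε in 𝓝[Ioo 0 ε₀] (0 : ℝ), ε < u :=
    mem_nhdsWithin_of_mem_nhds (Iio_mem_nhds hu)
  have hzero : Tendsto (fun ε => ∫ s in (-1)..u, ρ ε s • (w ε s - c)) (𝓝[Ioo 0 ε₀] 0) (𝓝 0) := by
    rw [Metric.tendsto_nhds]
    intro δ hδ
    have hδ' : 0 < δ / (C + 1) := by positivity
    filter_upwards [hmem, hw _ hδ'] with ε hε hwε
    rw [dist_zero_right]
    calc _ ≤ δ / (C + 1) * ∫ s, |ρ ε s| :=
          norm_integral_smul_le (hsm ε (hsub hε)).continuous (hsupp ε (hsub hε)) hδ'.le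
            fun s _ hs => hwε s hs
      _ ≤ δ / (C + 1) * C := mul_le_mul_of_nonneg_left (hC ε (hsub hε)) hδ'.le
      _ < δ := by
          rw [div_mul_eq_mul_div, div_lt_iff₀ (by positivity)]
          nlinarith
  have hone := (hlim.mono_left (nhdsWithin_mono 0 hsub)).smul_const c
  have hsum := hzero.add hone
  rw [zero_add, one_smul] at hsum
  refine hsum.congr' ?_
  filter_upwards [hmem, hlt] with ε hε hεu
  have hρc := (hsm ε (hsub hε)).continuous
  have hsub' : Function.support (ρ ε) ⊆ Ioc (-1) u := fun s hs =>
    ⟨by linarith [(hsupp ε (hsub hε) hs).1, hε.2, hε₀.2],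
      (hsupp ε (hsub hε) hs).2.trans hεu.le⟩
  rw [← intervalIntegral.integral_eq_integral_of_support_subset hsub',
    ← intervalIntegral.integral_smul_const, ← intervalIntegral.integral_add]
  · simp [smul_sub]
  · exact (hρc.smul ((hwc ε hε).sub continuous_const)).intervalIntegrable _ _
  · exact (hρc.smul continuous_const).intervalIntegrable _ _

end DeltaNet

section Dot

theorem fderiv_apply_eq_dot2_grad2 (f : ℝ × ℝ → ℝ) (p w : ℝ × ℝ) :
    fderiv ℝ f p w = dot2 (grad2 f p) w := by
  have h : w = w.1 • ((1 : ℝ), (0 : ℝ)) + w.2 • ((0 : ℝ), (1 : ℝ)) := by ext <;> simp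
  conv_lhs => rw [h]
  simp only [map_add, map_smul, dot2, grad2, smul_eq_mul]
  ring

theorem continuous_grad2 {f : ℝ × ℝ → ℝ} (hf : ContDiff ℝ (⊤ : ℕ∞) f) : Continuous (grad2 f) := by
  have h : Continuous (fderiv ℝ f) := hf.continuous_fderiv (by simp)
  exact (h.clm_apply continuous_const).prodMk (h.clm_apply continuous_const)

theorem continuous_dot2_self : Continuous fun p : ℝ × ℝ => dot2 p p := by
  unfold dot2
  fun_prop

theorem abs_dot2_self_le (p : ℝ × ℝ) : |dot2 p p| ≤ 2 * ‖p‖ ^ 2 := by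
  have h1 : |p.1| ≤ ‖p‖ := norm_fst_le p
  have h2 : |p.2| ≤ ‖p‖ := norm_snd_le p
  have h3 := pow_le_pow_left₀ (abs_nonneg _) h1 2
  have h4 := pow_le_pow_left₀ (abs_nonneg _) h2 2
  rw [sq_abs] at h3 h4
  unfold dot2
  rw [abs_of_nonneg (add_nonneg (mul_self_nonneg _) (mul_self_nonneg _))]
  nlinarith

theorem dot2_add_half_smul_self (a g : ℝ × ℝ) :
    dot2 (a + (2⁻¹ : ℝ) • g) (a + (2⁻¹ : ℝ) • g) - dot2 a a = dot2 g (a + (4⁻¹ : ℝ) • g) := by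
  simp only [dot2, Prod.fst_add, Prod.snd_add, Prod.smul_fst, Prod.smul_snd, smul_eq_mul]
  ring

end Dot

section Transverse

variable {f : ℝ × ℝ → ℝ} {ρ : ℝ → ℝ → ℝ} {x₀ xdot0 : ℝ × ℝ} {ε : ℝ} {x : ℝ → ℝ × ℝ}

theorem contDiff_infty_deriv {E : Type*} [NormedAddCommGroup E] [NormedSpace ℝ E] {y : ℝ → E}
    (hy : ContDiff ℝ (⊤ : ℕ∞) y) : ContDiff ℝ (⊤ : ℕ∞) (deriv y) :=
  (contDiff_infty_iff_deriv.1 hy).2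

theorem IsXSol.deriv_eq (hx : IsXSol f ρ x₀ xdot0 ε x) (u : ℝ) :
    deriv x u = xdot0 + ∫ s in (-1)..u, ρ ε s • ((2⁻¹ : ℝ) • grad2 f (x s)) := by
  rw [eq_add_integral_deriv ((contDiff_infty_deriv hx.1).of_le (by simp)) (-1) u, hx.2.2.2]
  congr 1
  refine intervalIntegral.integral_congr fun s _ => ?_
  simp only [hx.2.1 s, smul_smul, div_eq_mul_inv]

theorem IsXSol.deriv_eq_of_lt (hx : IsXSol f ρ x₀ xdot0 ε x) (hρc : Continuous (ρ ε))
    (hs : Function.support (ρ ε) ⊆ Icc (-ε) ε) (hε : ε < 1) {u : ℝ} (hu : u < -ε) :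
    deriv x u = xdot0 := by
  rw [hx.deriv_eq, integral_smul_eq_zero_of_lt hρc hs hε hu, add_zero]

theorem IsXSol.apply_neg_eq (hx : IsXSol f ρ x₀ xdot0 ε x) (hρc : Continuous (ρ ε))
    (hs : Function.support (ρ ε) ⊆ Icc (-ε) ε) (hε : ε < 1) :
    x (-ε) = x₀ + xdot0 - ε • xdot0 := by
  have hd : Differentiable ℝ x := hx.1.differentiable (by simp)
  have h := constant_of_has_deriv_right_zero (f := fun u => x u - u • xdot0) (a := -1) (b := -ε)
    (hd.continuous.sub (continuous_id.smul continuous_const)).continuousOn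
    (fun u hu => by
      have h1 := (hd u).hasDerivAt.sub ((hasDerivAt_id u).smul_const xdot0)
      rw [hx.deriv_eq_of_lt hρc hs hε hu.2, one_smul, sub_self] at h1
      exact h1.hasDerivWithinAt) (-ε) ⟨by linarith, le_rfl⟩
  simp only [hx.2.2.1, neg_smul, one_smul, sub_neg_eq_add] at h
  rw [← h]
  abel

/-- As long as the solution stays in the unit ball around `x₀ + xdot0` while the kernel acts, its
velocity is bounded. -/
theorem IsXSol.norm_deriv_le (hx : IsXSol f ρ x₀ xdot0 ε x) (hρc : Continuous (ρ ε))
    (hs : Function.support (ρ ε) ⊆ Icc (-ε) ε) (hε : ε < 1) {M C : ℝ} (hM : 0 ≤ M)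
    (hMb : ∀ p ∈ Metric.closedBall (x₀ + xdot0) 1, ‖grad2 f p‖ ≤ M)
    (hC : ∫ s, |ρ ε s| ≤ C) {u : ℝ}
    (hball : ∀ s ∈ Icc (-ε) ε, s ≤ u → ‖x s - (x₀ + xdot0)‖ ≤ 1) :
    ‖deriv x u‖ ≤ ‖xdot0‖ + M * C := by
  rw [hx.deriv_eq]
  refine (norm_add_le _ _).trans (add_le_add_right ?_ _)
  refine (norm_integral_smul_le hρc hs hM fun s hsu hsε => ?_).trans
    (mul_le_mul_of_nonneg_left hC hM)
  have hsu' : s ≤ u := by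
    have h1 : s ≤ max (-1) u := hsu.2
    rcases le_max_iff.1 h1 with h | h
    · linarith [hsε.1]
    · exact h
  have h2 := hMb (x s) (by rw [Metric.mem_closedBall, dist_eq_norm]; exact hball s hsε hsu')
  rw [norm_smul, Real.norm_of_nonneg (by norm_num)]
  linarith

theorem IsXSol.norm_sub_le (hx : IsXSol f ρ x₀ xdot0 ε x) (hρc : Continuous (ρ ε))
    (hs : Function.support (ρ ε) ⊆ Icc (-ε) ε) (hε0 : 0 < ε) (hε : ε < 1) {M C : ℝ} (hM : 0 ≤ M)
    (hMb : ∀ p ∈ Metric.closedBall (x₀ + xdot0) 1, ‖grad2 f p‖ ≤ M)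
    (hC : ∫ s, |ρ ε s| ≤ C) (hsmall : 3 * ε * (‖xdot0‖ + M * C) < 1) :
    ∀ u ∈ Icc (-ε) ε, ‖x u - (x₀ + xdot0)‖ ≤ 3 * ε * (‖xdot0‖ + M * C) := by
  have hC0 : 0 ≤ C := (integral_nonneg fun s => abs_nonneg _).trans hC
  have hd : Differentiable ℝ x := hx.1.differentiable (by simp)
  set B := ‖xdot0‖ + M * C
  have hxB : ‖xdot0‖ ≤ B := le_add_of_nonneg_right (by positivity)
  have hB0 : 0 ≤ B := (norm_nonneg _).trans hxB
  have hlocal : ∀ t ∈ Icc (-ε) ε, (∀ s ∈ Ico (-ε) t, ‖x s - (x₀ + xdot0)‖ ≤ 1) →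
      ‖x t - (x₀ + xdot0)‖ ≤ 3 * ε * B := by
    intro t ht hball
    have hmv := norm_image_sub_le_of_norm_deriv_le_segment' (f := x) (C := B)
      (a := -ε) (b := t) (fun u _ => (hd u).hasDerivAt.hasDerivWithinAt)
      (fun u hu => hx.norm_deriv_le hρc hs hε hM hMb hC
        fun s hsε hsu => hball s ⟨hsε.1, hsu.trans_lt hu.2⟩) t ⟨ht.1, le_rfl⟩
    have hstart : ‖x (-ε) - (x₀ + xdot0)‖ ≤ ε * B := by
      rw [hx.apply_neg_eq hρc hs hε, sub_sub_cancel_left, norm_neg, norm_smul,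
        Real.norm_of_nonneg hε0.le]
      exact mul_le_mul_of_nonneg_left hxB hε0.le
    have htri := norm_sub_le_norm_sub_add_norm_sub (x t) (x (-ε)) (x₀ + xdot0)
    have h2 : B * (t - -ε) ≤ B * (2 * ε) :=
      mul_le_mul_of_nonneg_left (by linarith [ht.2]) hB0
    nlinarith
  have hin : ∀ u ∈ Icc (-ε) ε, ‖x u - (x₀ + xdot0)‖ < 1 := by
    by_contra! hcon
    obtain ⟨t₁, ht₁, hge⟩ := hcon
    have hcpt : IsCompact (Icc (-ε) ε ∩ {u | 1 ≤ ‖x u - (x₀ + xdot0)‖}) :=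
      isCompact_Icc.inter_right
        (isClosed_le continuous_const (hd.continuous.sub continuous_const).norm)
    obtain ⟨t, ⟨ht, hgt⟩, hleast⟩ := hcpt.exists_isLeast ⟨t₁, ht₁, hge⟩
    have := hlocal t ht fun s hs' => by
      by_contra! h
      exact absurd (hleast ⟨⟨hs'.1, hs'.2.le.trans ht.2⟩, h.le⟩) (not_le.2 hs'.2)
    exact absurd (this.trans_lt hsmall) (not_lt.2 hgt)
  exact fun u hu => hlocal u hu fun s hs' => (hin s ⟨hs'.1, hs'.2.le.trans hu.2⟩).le

/-- The solutions of the regularized transverse system stay close to `x₀ + xdot0` while the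
regularized impulse acts, and their velocities are uniformly bounded. -/
theorem exists_eventually_bound (hf : ContDiff ℝ (⊤ : ℕ∞) f) (hρ : IsGenDeltaNet ρ) {ε₀ : ℝ}
    (hε₀ : ε₀ ∈ Ioo (0 : ℝ) 1) {x : ℝ → ℝ → ℝ × ℝ}
    (hx : ∀ ε ∈ Ioo 0 ε₀, IsXSol f ρ x₀ xdot0 ε (x ε)) :
    ∃ B : ℝ, (∀ δ > 0, ∀ᶠ ε in 𝓝[Ioo 0 ε₀] 0, ∀ u ∈ Icc (-ε) ε,
        ‖x ε u - (x₀ + xdot0)‖ ≤ δ) ∧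
      ∀ᶠ ε in 𝓝[Ioo 0 ε₀] 0, ∀ u, ‖deriv (x ε) u‖ ≤ B := by
  obtain ⟨hsm, hsupp, -, C, hC⟩ := hρ
  have hsub : Ioo 0 ε₀ ⊆ Ioo (0 : ℝ) 1 := Ioo_subset_Ioo_right hε₀.2.le
  have hmem : ∀ᶠ ε in 𝓝[Ioo 0 ε₀] (0 : ℝ), ε ∈ Ioo 0 ε₀ := self_mem_nhdsWithin
  obtain ⟨M, hMb⟩ := (isCompact_closedBall (x₀ + xdot0) 1).exists_bound_of_continuousOn
    (continuous_grad2 hf).continuousOn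
  have hM : 0 ≤ M :=
    (norm_nonneg _).trans (hMb (x₀ + xdot0) (Metric.mem_closedBall_self zero_le_one))
  have hsmall : ∀ δ > 0, ∀ᶠ ε in 𝓝[Ioo 0 ε₀] (0 : ℝ), 3 * ε * (‖xdot0‖ + M * C) < δ := by
    intro δ hδ
    have hcont : Continuous fun ε : ℝ => 3 * ε * (‖xdot0‖ + M * C) := by fun_prop
    have ht := (hcont.tendsto 0).mono_left (nhdsWithin_le_nhds (s := Ioo 0 ε₀))
    exact ht.eventually (gt_mem_nhds (by simpa using hδ))
  have hclose : ∀ δ > 0, ∀ᶠ ε in 𝓝[Ioo 0 ε₀] (0 : ℝ), ∀ u ∈ Icc (-ε) ε,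
      ‖x ε u - (x₀ + xdot0)‖ ≤ δ := by
    intro δ hδ
    filter_upwards [hmem, hsmall δ hδ, hsmall 1 one_pos] with ε hε h1 h2 u hu
    exact ((hx ε hε).norm_sub_le (hsm ε (hsub hε)).continuous (hsupp ε (hsub hε)) hε.1
      (hsub hε).2 hM hMb (hC ε (hsub hε)) h2 u hu).trans h1.le
  refine ⟨‖xdot0‖ + M * C, hclose, ?_⟩
  filter_upwards [hmem, hclose 1 one_pos] with ε hε h1 u
  exact (hx ε hε).norm_deriv_le (hsm ε (hsub hε)).continuous (hsupp ε (hsub hε)) (hsub hε).2 hM hMb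
    (hC ε (hsub hε)) fun s hs _ => h1 s hs

theorem eventually_norm_comp_sub_le {E : Type*} [NormedAddCommGroup E] {l : Filter ℝ}
    {x : ℝ → ℝ → ℝ × ℝ} {p : ℝ × ℝ}
    (hclose : ∀ δ > 0, ∀ᶠ ε in l, ∀ u ∈ Icc (-ε) ε, ‖x ε u - p‖ ≤ δ)
    {h : ℝ × ℝ → E} (hh : Continuous h) :
    ∀ δ > 0, ∀ᶠ ε in l, ∀ u ∈ Icc (-ε) ε, ‖h (x ε u) - h p‖ ≤ δ := by
  intro δ hδ
  obtain ⟨η, hη, hball⟩ := Metric.continuous_iff.1 hh p δ hδ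
  filter_upwards [hclose (η / 2) (half_pos hη)] with ε hε u hu
  rw [← dist_eq_norm]
  refine (hball _ ?_).le
  rw [dist_eq_norm]
  exact (hε u hu).trans_lt (half_lt_self hη)

/-- The velocities converge to a step function away from the shock. -/
theorem tendsto_deriv (hf : ContDiff ℝ (⊤ : ℕ∞) f) (hρ : IsGenDeltaNet ρ) {ε₀ : ℝ}
    (hε₀ : ε₀ ∈ Ioo (0 : ℝ) 1) {x : ℝ → ℝ → ℝ × ℝ}
    (hx : ∀ ε ∈ Ioo 0 ε₀, IsXSol f ρ x₀ xdot0 ε (x ε)) {u : ℝ} (hu : u ≠ 0) :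
    Tendsto (fun ε => deriv (x ε) u) (𝓝[Ioo 0 ε₀] 0) (𝓝 (xdot0
      + (Ioi (0 : ℝ)).indicator (fun _ => (2⁻¹ : ℝ) • grad2 f (x₀ + xdot0)) u)) := by
  have hsub : Ioo 0 ε₀ ⊆ Ioo (0 : ℝ) 1 := Ioo_subset_Ioo_right hε₀.2.le
  have hmem : ∀ᶠ ε in 𝓝[Ioo 0 ε₀] (0 : ℝ), ε ∈ Ioo 0 ε₀ := self_mem_nhdsWithin
  obtain ⟨B, hclose, -⟩ := exists_eventually_bound hf hρ hε₀ hx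
  have hg : Continuous fun q => (2⁻¹ : ℝ) • grad2 f q :=
    continuous_const.fun_smul (continuous_grad2 hf)
  rcases lt_or_gt_of_ne hu with hu | hu
  · rw [indicator_of_notMem (by simpa using hu.le), add_zero]
    refine tendsto_const_nhds.congr' ?_
    filter_upwards [hmem, mem_nhdsWithin_of_mem_nhds (Iio_mem_nhds (neg_pos.2 hu))] with ε hε hεu
    exact ((hx ε hε).deriv_eq_of_lt (hρ.1 ε (hsub hε)).continuous (hρ.2.1 ε (hsub hε)) (hsub hε).2
      (lt_neg.1 hεu)).symm
  · rw [indicator_of_mem (by simpa using hu)]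
    refine (tendsto_const_nhds.add (hρ.tendsto_integral_smul hε₀
      (fun ε hε => hg.comp (hx ε hε).1.continuous)
      (eventually_norm_comp_sub_le hclose hg) hu)).congr' ?_
    filter_upwards [hmem] with ε hε
    exact ((hx ε hε).deriv_eq u).symm

end Transverse

section VEquation

variable {f : ℝ × ℝ → ℝ} {ρ : ℝ → ℝ → ℝ} {x₀ xdot0 : ℝ × ℝ} {v₀ vdot0 ε : ℝ} {x : ℝ → ℝ × ℝ}
  {v : ℝ → ℝ}

/-- The first integral of the `v`-equation: the term `∇f(x)·ẋ ρ` is the derivative of `|ẋ|²`. -/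
theorem IsVSol.deriv_eq (hv : IsVSol f ρ x v₀ vdot0 ε v) (hx : IsXSol f ρ x₀ xdot0 ε x)
    (hf : ContDiff ℝ (⊤ : ℕ∞) f) (hρd : Differentiable ℝ (ρ ε))
    (hs : Function.support (ρ ε) ⊆ Icc (-ε) ε) (hε : ε < 1) (u : ℝ) :
    deriv v u = vdot0 + (ρ ε u • f (x u)
      + (dot2 (deriv x u) (deriv x u) - dot2 xdot0 xdot0)) := by
  have hderiv : ∀ t, HasDerivAt (fun t => deriv v t - (ρ ε t * f (x t)
      + dot2 (deriv x t) (deriv x t))) 0 t := by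
    intro t
    have hxd := (hx.1.differentiable (by simp) t).hasDerivAt
    have hxdd := ((contDiff_infty_deriv hx.1).differentiable (by simp) t).hasDerivAt
    have hvdd := ((contDiff_infty_deriv hv.1).differentiable (by simp) t).hasDerivAt
    have hfx := (hf.differentiable (by simp) (x t)).hasFDerivAt.comp_hasDerivAt t hxd
    rw [fderiv_apply_eq_dot2_grad2] at hfx
    rw [hx.2.1 t] at hxdd
    rw [hv.2.1 t] at hvdd
    have h1 := (hasFDerivAt_fst (𝕜 := ℝ)).comp_hasDerivAt t hxdd
    have h2 := (hasFDerivAt_snd (𝕜 := ℝ)).comp_hasDerivAt t hxdd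
    have hmain := hvdd.sub ((((hρd t).hasDerivAt).mul hfx).add ((h1.mul h1).add (h2.mul h2)))
    refine hmain.congr_deriv ?_
    simp only [dot2, ContinuousLinearMap.coe_fst', ContinuousLinearMap.coe_snd', Prod.smul_fst,
      Prod.smul_snd, smul_eq_mul, Function.comp]
    ring
  have hconst := is_const_of_deriv_eq_zero (fun t => (hderiv t).differentiableAt)
    (fun t => (hderiv t).deriv) u (-1)
  have hρ0 : ρ ε (-1) = 0 := by
    by_contra h
    linarith [(hs h).1]
  simp only [hρ0, zero_mul, zero_add, hv.2.2.2, hx.2.2.2] at hconst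
  rw [smul_eq_mul]
  linarith

theorem IsVSol.apply_eq (hv : IsVSol f ρ x v₀ vdot0 ε v) (hx : IsXSol f ρ x₀ xdot0 ε x)
    (hf : ContDiff ℝ (⊤ : ℕ∞) f) (hρd : Differentiable ℝ (ρ ε))
    (hs : Function.support (ρ ε) ⊆ Icc (-ε) ε) (hε : ε < 1) (u : ℝ) :
    v u = v₀ + vdot0 * (1 + u) + (∫ s in (-1)..u, ρ ε s • f (x s))
      + ∫ s in (-1)..u, (dot2 (deriv x s) (deriv x s) - dot2 xdot0 xdot0) := by
  have hxd : Continuous (deriv x) := (contDiff_infty_deriv hx.1).continuous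
  have hA : Continuous fun s => ρ ε s • f (x s) :=
    hρd.continuous.smul (hf.continuous.comp hx.1.continuous)
  have hE : Continuous fun s => dot2 (deriv x s) (deriv x s) - dot2 xdot0 xdot0 :=
    (continuous_dot2_self.comp hxd).sub continuous_const
  rw [eq_add_integral_deriv (hv.1.of_le (by simp)) (-1) u, hv.2.2.1,
    intervalIntegral.integral_congr fun s _ => hv.deriv_eq hx hf hρd hs hε s,
    intervalIntegral.integral_add intervalIntegrable_const
      ((hA.intervalIntegrable _ _).add (hE.intervalIntegrable _ _)),
    intervalIntegral.integral_add (hA.intervalIntegrable _ _) (hE.intervalIntegrable _ _),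
    intervalIntegral.integral_const, smul_eq_mul]
  ring

end VEquation

theorem intervalIntegral_indicator_Ioi_const (K u : ℝ) :
    ∫ s in (-1)..u, (Ioi (0 : ℝ)).indicator (fun _ => K) s
      = (Ioi (0 : ℝ)).indicator (fun u => K * u) u := by
  rcases le_or_gt u 0 with hu | hu
  · rw [indicator_of_notMem (by simpa using hu)]
    refine intervalIntegral.integral_zero_ae (Eventually.of_forall fun s hs => ?_)
    have h1 : s ≤ max (-1) u := hs.2
    exact indicator_of_notMem (by simpa using h1.trans (max_le (by norm_num) hu)) _
  · rw [indicator_of_mem (by simpa using hu), intervalIntegral.integral_of_le (by linarith),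
      setIntegral_indicator measurableSet_Ioi,
      show Ioc (-1) u ∩ Ioi 0 = Ioc 0 u by
        ext s
        simp only [mem_inter_iff, mem_Ioc, mem_Ioi]
        constructor
        · rintro ⟨⟨-, h⟩, h'⟩
          exact ⟨h', h⟩
        · rintro ⟨h', h⟩
          exact ⟨⟨by linarith, h⟩, h'⟩]
    simp [hu.le, mul_comm]

/-- The regularized `v`-component of the geodesics converges distributionally to
`v₀ + v̇₀(1+u) + f(x̂)θ(u) + [∇f(x̂)·(ẋ₀ + ¼∇f(x̂))] u₊`, where `x̂ = x₀ + ẋ₀`: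
the geodesic suffers a jump of magnitude `f(x̂)` and a kink at the shock. -/
theorem v_distributional_limit (f : ℝ × ℝ → ℝ) (hf : ContDiff ℝ (⊤ : ℕ∞) f)
    (ρ : ℝ → ℝ → ℝ) (hρ : IsGenDeltaNet ρ) (x₀ xdot0 : ℝ × ℝ)
    (ε₀ : ℝ) (hε₀ : ε₀ ∈ Ioo (0:ℝ) 1) (x : ℝ → ℝ → ℝ × ℝ)
    (hx : ∀ ε ∈ Ioo 0 ε₀, IsXSol f ρ x₀ xdot0 ε (x ε))
    (v₀ vdot0 : ℝ) (v : ℝ → ℝ → ℝ)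
    (hv : ∀ ε ∈ Ioo 0 ε₀, IsVSol f ρ (x ε) v₀ vdot0 ε (v ε)) :
    ∀ φ : ℝ → ℝ, ContDiff ℝ (⊤ : ℕ∞) φ → HasCompactSupport φ →
      Tendsto (fun ε => ∫ u, v ε u * φ u) (nhdsWithin 0 (Ioo 0 ε₀))
        (nhds ((∫ u, (v₀ + vdot0 * (1 + u)) * φ u)
          + f (x₀ + xdot0) * (∫ u in Ioi (0:ℝ), φ u)
          + dot2 (grad2 f (x₀ + xdot0)) (xdot0 + (4⁻¹ : ℝ) • grad2 f (x₀ + xdot0))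
              * (∫ u in Ioi (0:ℝ), u * φ u))) := by
  intro φ hφ hφc
  have hsub : Ioo 0 ε₀ ⊆ Ioo (0 : ℝ) 1 := Ioo_subset_Ioo_right hε₀.2.le
  have hmem : ∀ᶠ ε in 𝓝[Ioo 0 ε₀] (0 : ℝ), ε ∈ Ioo 0 ε₀ := self_mem_nhdsWithin
  obtain ⟨B, hclose, hB⟩ := exists_eventually_bound hf hρ hε₀ hx
  obtain ⟨C, hC⟩ := hρ.2.2.2
  have hfclose := eventually_norm_comp_sub_le hclose hf.continuous
  set p := x₀ + xdot0
  set K := dot2 (grad2 f p) (xdot0 + (4⁻¹ : ℝ) • grad2 f p)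
  set D := 2 * B ^ 2 + |dot2 xdot0 xdot0|
  have hvapp : ∀ ε ∈ Ioo 0 ε₀, ∀ u, v ε u = v₀ + vdot0 * (1 + u)
      + (∫ s in (-1)..u, ρ ε s • f (x ε s))
      + ∫ s in (-1)..u, (dot2 (deriv (x ε) s) (deriv (x ε) s) - dot2 xdot0 xdot0) :=
    fun ε hε u => (hv ε hε).apply_eq (hx ε hε) hf
      ((hρ.1 ε (hsub hε)).differentiable (by simp)) (hρ.2.1 ε (hsub hε)) (hsub hε).2 u
  have henergy : ∀ᶠ ε in 𝓝[Ioo 0 ε₀] (0 : ℝ), ∀ s,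
      ‖dot2 (deriv (x ε) s) (deriv (x ε) s) - dot2 xdot0 xdot0‖ ≤ D := by
    filter_upwards [hB] with ε hε s
    refine (norm_sub_le _ _).trans (add_le_add_left ((abs_dot2_self_le _).trans ?_) _)
    have := pow_le_pow_left₀ (norm_nonneg _) (hε s) 2
    linarith
  have hjump : ∀ u : ℝ, u ≠ 0 → Tendsto (fun ε => ∫ s in (-1)..u, ρ ε s • f (x ε s))
      (𝓝[Ioo 0 ε₀] 0) (𝓝 ((Ioi (0 : ℝ)).indicator (fun _ => f p) u)) := by
    intro u hu
    rcases lt_or_gt_of_ne hu with hu | hu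
    · rw [indicator_of_notMem (by simpa using hu.le)]
      refine tendsto_const_nhds.congr' ?_
      filter_upwards [hmem, mem_nhdsWithin_of_mem_nhds (Iio_mem_nhds (neg_pos.2 hu))]
        with ε hε hεu
      exact (integral_smul_eq_zero_of_lt (hρ.1 ε (hsub hε)).continuous (hρ.2.1 ε (hsub hε))
        (hsub hε).2 (lt_neg.1 hεu) _).symm
    · rw [indicator_of_mem (by simpa using hu)]
      exact hρ.tendsto_integral_smul hε₀
        (fun ε hε => hf.continuous.comp (hx ε hε).1.continuous) hfclose hu
  have hkink : ∀ u : ℝ, Tendsto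
      (fun ε => ∫ s in (-1)..u, (dot2 (deriv (x ε) s) (deriv (x ε) s) - dot2 xdot0 xdot0))
      (𝓝[Ioo 0 ε₀] 0) (𝓝 ((Ioi (0 : ℝ)).indicator (fun u => K * u) u)) := by
    intro u
    rw [← intervalIntegral_indicator_Ioi_const]
    refine intervalIntegral.tendsto_integral_filter_of_dominated_convergence (fun _ => D)
      ?_ ?_ intervalIntegrable_const ?_
    · filter_upwards [hmem] with ε hε
      exact ((continuous_dot2_self.comp (contDiff_infty_deriv (hx ε hε).1).continuous).sub
        continuous_const).aestronglyMeasurable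
    · filter_upwards [henergy] with ε hε
      exact Eventually.of_forall fun s _ => hε s
    · filter_upwards [Measure.ae_ne volume (0 : ℝ)] with s hs _
      have h := ((continuous_dot2_self.tendsto _).comp
        (tendsto_deriv hf hρ hε₀ hx hs)).sub_const (dot2 xdot0 xdot0)
      by_cases hs0 : s ∈ Ioi (0 : ℝ)
      · rw [indicator_of_mem hs0, dot2_add_half_smul_self] at h
        rw [indicator_of_mem hs0]
        exact h
      · rw [indicator_of_notMem hs0, add_zero, sub_self] at h
        rw [indicator_of_notMem hs0]
        exact h
  have hlimit : (∫ u, (v₀ + vdot0 * (1 + u)) * φ u) + f p * (∫ u in Ioi (0:ℝ), φ u)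
      + K * (∫ u in Ioi (0:ℝ), u * φ u)
      = ∫ u, (v₀ + vdot0 * (1 + u) + (Ioi (0 : ℝ)).indicator (fun _ => f p) u
          + (Ioi (0 : ℝ)).indicator (fun u => K * u) u) * φ u := by
    have hint : ∀ h : ℝ → ℝ, Continuous h → Integrable fun u => h u * φ u := fun h hh =>
      (hh.mul hφ.continuous).integrable_of_hasCompactSupport hφc.mul_left
    rw [← integral_const_mul, ← integral_const_mul, ← integral_indicator measurableSet_Ioi,
      ← integral_indicator measurableSet_Ioi, ← integral_add, ← integral_add]
    · refine integral_congr_ae (Eventually.of_forall fun u => ?_)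
      by_cases hu : u ∈ Ioi (0 : ℝ)
      · simp only [indicator_of_mem hu]
        ring
      · simp only [indicator_of_notMem hu]
        ring
    · exact (hint _ (by fun_prop)).add ((hint _ continuous_const).indicator measurableSet_Ioi)
    · exact ((hint _ continuous_id).const_mul K).indicator measurableSet_Ioi
    · exact hint _ (by fun_prop)
    · exact (hint _ continuous_const).indicator measurableSet_Ioi
  rw [hlimit]
  refine tendsto_integral_filter_of_dominated_convergence
    (fun u => (|v₀ + vdot0 * (1 + u)| + (|f p| + 1) * C + D * |u - -1|) * ‖φ u‖) ?_ ?_ ?_ ?_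
  · filter_upwards [hmem] with ε hε
    exact ((hv ε hε).1.continuous.mul hφ.continuous).aestronglyMeasurable
  · filter_upwards [hmem, henergy, hfclose 1 one_pos] with ε hε hE hfε
    refine Eventually.of_forall fun u => ?_
    rw [norm_mul, hvapp ε hε u]
    refine mul_le_mul_of_nonneg_right ?_ (norm_nonneg _)
    refine (norm_add_le _ _).trans (add_le_add ((norm_add_le _ _).trans (add_le_add le_rfl ?_)) ?_)
    · refine (norm_integral_smul_le (hρ.1 ε (hsub hε)).continuous (hρ.2.1 ε (hsub hε))
        (by positivity) fun s _ hs => ?_).trans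
        (mul_le_mul_of_nonneg_left (hC ε (hsub hε)) (by positivity))
      have := norm_le_norm_add_norm_sub' (f (x ε s)) (f p)
      exact this.trans (add_le_add le_rfl (hfε s hs))
    · exact intervalIntegral.norm_integral_le_of_norm_le_const fun s _ => hE s
  · exact ((by fun_prop : Continuous fun u : ℝ =>
      |v₀ + vdot0 * (1 + u)| + (|f p| + 1) * C + D * |u - -1|).mul
      hφ.continuous.norm).integrable_of_hasCompactSupport hφc.norm.mul_left
  · filter_upwards [Measure.ae_ne volume (0 : ℝ)] with u hu
    refine Tendsto.mul_const _ ((((hjump u hu).const_add _).add (hkink u)).congr' ?_)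
    filter_upwards [hmem] with ε hε
    exact (hvapp ε hε u).symm
end

section
/- Let f : ℝ → ℝ be smooth, (ρ_ε)_{ε∈(0,1)} a generalized delta net, x_ε (ε < ε₀) the solution of ẍ_ε = ½ f'(x_ε) ρ_ε with x_ε(−1) = x₀, ẋ_ε(−1) = 0, and let N_ε = (N^u_ε, N^v_ε, N^x_ε, N^y_ε) be the solution of the regularized Jacobi system with initial conditions N^a_ε(−1) = 0 for all a and (Ṅ^u_ε, Ṅ^v_ε, Ṅ^x_ε, Ṅ^y_ε)(−1) = (a, b, 0, 0). Then N^x_ε converges distributionally to ½ a f'(x₀)(u₊ + θ(u)): for every smooth compactly supported φ : ℝ → ℝ, ∫_ℝ N^x_ε(u) φ(u) du → ½ a f'(x₀) ∫_0^∞ (1 + u) φ(u) du as ε → 0. -/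
open MeasureTheory Filter Set

/-- `x` is the (smooth, globally defined) background geodesic of the axisymmetric impulsive
pp-wave restricted to the hypersurface `y = 0`: `ẍ(u) = ½ f'(x(u)) ρ_ε(u)`, with
`x(-1) = x₀`, `ẋ(-1) = 0`. -/
def IsXSol1 (f : ℝ → ℝ) (ρ : ℝ → ℝ → ℝ) (x₀ : ℝ) (ε : ℝ) (x : ℝ → ℝ) : Prop :=
  ContDiff ℝ (⊤ : ℕ∞) x ∧ (∀ u, deriv (deriv x) u = (ρ ε u / 2) * deriv f (x u)) ∧
  x (-1) = x₀ ∧ deriv x (-1) = 0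

/-- The regularized Jacobi (geodesic deviation) system of the axisymmetric impulsive
pp-wave along the background geodesic `x`:
`N̈ᵘ = 0`, `N̈ʸ = 0`,
`N̈ˣ = [Ṅᵘ f'(x) + ½ Nˣ f''(x)] ρ + ½ f'(x) Nᵘ ρ̇`,
`N̈ᵛ = 2 (Nˣ f'(x) ρ)' − Nˣ f'(x) ρ̇ + (Nᵘ f(x) ρ)'' − Nᵘ f''(x) ẋ² ρ − Nᵘ f'(x) ẍ ρ`. -/
def JacobiEqs (f : ℝ → ℝ) (ρε : ℝ → ℝ) (x : ℝ → ℝ) (Nu Nv Nx Ny : ℝ → ℝ) : Prop :=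
  (∀ u, deriv (deriv Nu) u = 0) ∧
  (∀ u, deriv (deriv Ny) u = 0) ∧
  (∀ u, deriv (deriv Nx) u =
    (deriv Nu u * deriv f (x u) + (1 / 2) * Nx u * deriv (deriv f) (x u)) * ρε u
    + (1 / 2) * deriv f (x u) * Nu u * deriv ρε u) ∧
  (∀ u, deriv (deriv Nv) u =
    2 * deriv (fun t => Nx t * deriv f (x t) * ρε t) u
    - Nx u * deriv f (x u) * deriv ρε u
    + deriv (deriv (fun t => Nu t * f (x t) * ρε t)) u
    - Nu u * deriv (deriv f) (x u) * (deriv x u) ^ 2 * ρε u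
    - Nu u * deriv f (x u) * deriv (deriv x) u * ρε u)

/-- Uniqueness for the scalar second-order linear equation `M̈ = q M` with bounded coefficient. -/
lemma eq_zero_of_second_order_linear {q M P : ℝ → ℝ} {L t₀ : ℝ} (hq : ∀ t, |q t| ≤ L)
    (hM : ∀ t, HasDerivAt M (P t) t) (hP : ∀ t, HasDerivAt P (q t * M t) t)
    (hM₀ : M t₀ = 0) (hP₀ : P t₀ = 0) (t : ℝ) : M t = 0 := by
  have hL : 0 ≤ L := (abs_nonneg _).trans (hq 0)
  have key : (fun t => (M t, P t)) = fun _ => ((0 : ℝ), (0 : ℝ)) := by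
    refine ODE_solution_unique_univ (v := fun t z => (z.2, q t * z.1)) (s := fun _ => univ)
      (K := Real.toNNReal (1 + L)) (t₀ := t₀) ?_ ?_ ?_ (by simp [hM₀, hP₀])
    · intro t
      refine (LipschitzWith.of_dist_le_mul fun z w => ?_).lipschitzOnWith
      rw [Real.coe_toNNReal _ (by linarith), Prod.dist_eq, Prod.dist_eq]
      set D := max (dist z.1 w.1) (dist z.2 w.2)
      have hD : 0 ≤ D := dist_nonneg.trans (le_max_left _ _)
      refine max_le ?_ ?_
      · have : dist z.2 w.2 ≤ D := le_max_right _ _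
        nlinarith
      · have h₁ : dist z.1 w.1 ≤ D := le_max_left _ _
        have h₂ : dist (q t * z.1) (q t * w.1) = |q t| * dist z.1 w.1 := by
          rw [Real.dist_eq, Real.dist_eq, ← mul_sub, abs_mul]
        have h₃ : |q t| * dist z.1 w.1 ≤ L * D :=
          mul_le_mul (hq t) h₁ dist_nonneg hL
        simp only [h₂]
        linarith
    · exact fun t => ⟨(hM t).prodMk (hP t), trivial⟩
    · refine fun t => ⟨?_, trivial⟩
      exact (hasDerivAt_const t ((0 : ℝ), (0 : ℝ))).congr_deriv (by simp [Prod.zero_eq_mk])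
  exact congrArg Prod.fst (congrFun key t)

lemma ContDiff.hasDerivAt_of_smooth {g : ℝ → ℝ} (hg : ContDiff ℝ (⊤ : ℕ∞) g) (t : ℝ) :
    HasDerivAt g (deriv g t) t :=
  (hg.differentiable (by simp) t).hasDerivAt

lemma ContDiff.deriv_of_smooth {g : ℝ → ℝ} (hg : ContDiff ℝ (⊤ : ℕ∞) g) :
    ContDiff ℝ (⊤ : ℕ∞) (deriv g) :=
  (contDiff_infty_iff_deriv.1 hg).2

/-- The transverse Jacobi component is the reparametrization field `a (1 + u) ẋ`. -/
lemma transverse_jacobi_eq {f r x Nu Nx : ℝ → ℝ} {a : ℝ} (hf : ContDiff ℝ (⊤ : ℕ∞) f)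
    (hr : ContDiff ℝ (⊤ : ℕ∞) r) (hrc : HasCompactSupport r) (hx : ContDiff ℝ (⊤ : ℕ∞) x)
    (hxeq : ∀ u, deriv (deriv x) u = (r u / 2) * deriv f (x u)) (hx₁ : deriv x (-1) = 0)
    (hNu : ContDiff ℝ (⊤ : ℕ∞) Nu) (hNx : ContDiff ℝ (⊤ : ℕ∞) Nx)
    (hNueq : ∀ u, deriv (deriv Nu) u = 0)
    (hNxeq : ∀ u, deriv (deriv Nx) u =
      (deriv Nu u * deriv f (x u) + (1 / 2) * Nx u * deriv (deriv f) (x u)) * r u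
      + (1 / 2) * deriv f (x u) * Nu u * deriv r u)
    (hNu₀ : Nu (-1) = 0) (hNu₁ : deriv Nu (-1) = a)
    (hNx₀ : Nx (-1) = 0) (hNx₁ : deriv Nx (-1) = 0) (u : ℝ) :
    Nx u = a * (1 + u) * deriv x u := by
  have hdNu : ∀ t, deriv Nu t = a := fun t => by
    rw [← hNu₁]
    exact is_const_of_deriv_eq_zero (hNu.deriv_of_smooth.differentiable (by simp)) hNueq _ _
  have haff : ∀ t : ℝ, HasDerivAt (fun t : ℝ => a * (1 + t)) a t := fun t => by
    simpa using ((hasDerivAt_id t).const_add 1).const_mul a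
  have hNu_eq : ∀ t, Nu t = a * (1 + t) := by
    have hd : ∀ t, HasDerivAt (fun t => Nu t - a * (1 + t)) 0 t := fun t =>
      ((hNu.hasDerivAt_of_smooth t).sub (haff t)).congr_deriv (by rw [hdNu, sub_self])
    intro t
    have := is_const_of_deriv_eq_zero (fun s => (hd s).differentiableAt)
      (fun s => (hd s).deriv) t (-1)
    simp only [hNu₀] at this
    linarith
  have hx' : ∀ t, HasDerivAt (deriv x) (r t / 2 * deriv f (x t)) t := fun t => by
    rw [← hxeq]; exact hx.deriv_of_smooth.hasDerivAt_of_smooth t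
  obtain ⟨L, hL⟩ : ∃ L, ∀ t, ‖r t / 2 * deriv (deriv f) (x t)‖ ≤ L := by
    have hc : HasCompactSupport fun t => r t / 2 * deriv (deriv f) (x t) := by
      have : (fun t => r t / 2 * deriv (deriv f) (x t)) =
          fun t => r t * (deriv (deriv f) (x t) / 2) := by ext t; ring
      rw [this]
      exact hrc.mul_right
    refine hc.exists_bound_of_continuous ?_
    exact (hr.continuous.div_const 2).mul
      (hf.deriv_of_smooth.deriv_of_smooth.continuous.comp hx.continuous)
  have key := eq_zero_of_second_order_linear (t₀ := -1)
    (q := fun t => r t / 2 * deriv (deriv f) (x t))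
    (M := fun t => Nx t - a * (1 + t) * deriv x t)
    (P := fun t => deriv Nx t - (a * deriv x t + a * (1 + t) * (r t / 2 * deriv f (x t))))
    hL ?_ ?_ (by simp [hNx₀]) (by simp [hNx₁, hx₁]) u
  · linarith
  · exact fun t => (hNx.hasDerivAt_of_smooth t).sub ((haff t).mul (hx' t))
  · intro t
    have hfx : HasDerivAt (fun t => deriv f (x t)) (deriv (deriv f) (x t) * deriv x t) t :=
      (hf.deriv_of_smooth.hasDerivAt_of_smooth (x t)).comp t (hx.hasDerivAt_of_smooth t)
    refine ((hNx.deriv_of_smooth.hasDerivAt_of_smooth t).sub (((hx' t).const_mul a).add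
      ((haff t).mul (((hr.hasDerivAt_of_smooth t).div_const 2).mul hfx)))).congr_deriv ?_
    simp only [hNxeq, hdNu, hNu_eq, Pi.mul_apply]
    ring

/-- A solution of `ẍ = ½ h(x) r` at rest at time `-1` has velocity `½ ∫_{-1}^u r h(x)`. -/
lemma velocity_eq_integral {h r x v : ℝ → ℝ} (hh : Continuous h) (hr : Continuous r)
    (hx : ∀ u, HasDerivAt x (v u) u) (hv : ∀ u, HasDerivAt v (r u / 2 * h (x u)) u)
    (hv₁ : v (-1) = 0) (u : ℝ) : v u = ∫ t in (-1)..u, r t / 2 * h (x t) := by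
  have hxc : Continuous x := continuous_iff_continuousAt.2 fun u => (hx u).continuousAt
  have hc : Continuous fun t => r t / 2 * h (x t) :=
    (hr.div_const 2).mul (hh.comp hxc)
  rw [intervalIntegral.integral_eq_sub_of_hasDerivAt (fun t _ => hv t)
    (hc.intervalIntegrable _ _), hv₁, sub_zero]

/-- The velocity vanishes before the impulse. -/
lemma velocity_eq_zero {h r x v : ℝ → ℝ} {ε u : ℝ} (hε : ε < 1) (hh : Continuous h)
    (hr : Continuous r) (hsupp : Function.support r ⊆ Icc (-ε) ε)
    (hx : ∀ u, HasDerivAt x (v u) u) (hv : ∀ u, HasDerivAt v (r u / 2 * h (x u)) u)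
    (hv₁ : v (-1) = 0) (hu : u < -ε) : v u = 0 := by
  rw [velocity_eq_integral hh hr hx hv hv₁ u]
  refine (intervalIntegral.integral_congr (g := fun _ => (0 : ℝ)) fun t ht => ?_).trans (by simp)
  have ht' : t < -ε := ht.2.trans_lt (max_lt (by linarith) hu)
  have : r t = 0 := by
    by_contra h0
    exact absurd (hsupp h0).1 (not_le.2 ht')
  simp [this]

/-- If `|h(x)| ≤ K` whenever `r ≠ 0` up to time `u`, the velocity at time `u` is at most
`½ K ∫ |r|`. -/
lemma abs_velocity_le {h r x v : ℝ → ℝ} {ε K C u : ℝ} (hε : ε < 1) (hK : 0 ≤ K)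
    (hh : Continuous h)
    (hr : Continuous r) (hsupp : Function.support r ⊆ Icc (-ε) ε)
    (hC : ∫ t, |r t| ≤ C)
    (hx : ∀ u, HasDerivAt x (v u) u) (hv : ∀ u, HasDerivAt v (r u / 2 * h (x u)) u)
    (hv₁ : v (-1) = 0) (hb : ∀ t ∈ Icc (-ε) ε, t < u → |h (x t)| ≤ K) : |v u| ≤ K * C / 2 := by
  have hC₀ : 0 ≤ C := (integral_nonneg fun t => abs_nonneg (r t)).trans hC
  by_cases hu : u < -ε
  · rw [velocity_eq_zero hε hh hr hsupp hx hv hv₁ hu, abs_zero]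
    positivity
  have hcs : HasCompactSupport r := HasCompactSupport.of_support_subset_isCompact isCompact_Icc hsupp
  have hint : Integrable fun t => K / 2 * |r t| :=
    (hr.abs.integrable_of_hasCompactSupport hcs.norm).const_mul _
  rw [velocity_eq_integral hh hr hx hv hv₁ u, ← Real.norm_eq_abs]
  calc ‖∫ t in (-1)..u, r t / 2 * h (x t)‖ ≤ ∫ t in (-1)..u, K / 2 * |r t| := by
        refine intervalIntegral.norm_integral_le_of_norm_le (by linarith) ?_ hint.intervalIntegrable
        have hne : ∀ᵐ t : ℝ, t ≠ u := by simp [ae_iff]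
        filter_upwards [hne] with t htu ht
        by_cases h0 : r t = 0
        · simp [h0]
        · have := hb t (hsupp h0) (lt_of_le_of_ne ht.2 htu)
          rw [Real.norm_eq_abs, abs_mul, abs_div, abs_two]
          nlinarith [abs_nonneg (r t)]
    _ ≤ ∫ t, K / 2 * |r t| := by
        rw [intervalIntegral.integral_of_le (by linarith)]
        exact setIntegral_le_integral hint (Eventually.of_forall fun t => by positivity)
    _ ≤ K * C / 2 := by
        rw [integral_const_mul]
        nlinarith

/-- During the impulse the trajectory moves by at most `K C ε`, provided the force is bounded by `K`
on the unit interval around the initial position and `K C ε < 1`. -/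
lemma abs_displacement_le {h r x v : ℝ → ℝ} {ε K C x₀ : ℝ} (hε : ε < 1)
    (hK : ∀ y, |y - x₀| ≤ 1 → |h y| ≤ K) (hh : Continuous h)
    (hr : Continuous r) (hsupp : Function.support r ⊆ Icc (-ε) ε)
    (hC : ∫ t, |r t| ≤ C) (hsmall : K * C * ε < 1)
    (hx : ∀ u, HasDerivAt x (v u) u) (hv : ∀ u, HasDerivAt v (r u / 2 * h (x u)) u)
    (hx₁ : x (-1) = x₀) (hv₁ : v (-1) = 0) :
    ∀ u ∈ Icc (-ε) ε, |x u - x₀| ≤ K * C * ε := by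
  have hK₀ : 0 ≤ K := (abs_nonneg _).trans (hK x₀ (by simp))
  have hC₀ : 0 ≤ C := (integral_nonneg fun t => abs_nonneg (r t)).trans hC
  have hxc : Continuous x := continuous_iff_continuousAt.2 fun u => (hx u).continuousAt
  have hstart : x (-ε) = x₀ := by
    have h₀ := norm_image_sub_le_of_norm_deriv_le_segment' (f := x) (f' := v) (C := 0)
      (a := -1) (b := -ε) (fun t _ => (hx t).hasDerivWithinAt)
      (fun t ht => by rw [velocity_eq_zero hε hh hr hsupp hx hv hv₁ ht.2, norm_zero])
      (-ε) ⟨by linarith, le_rfl⟩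
    rw [hx₁, zero_mul] at h₀
    exact sub_eq_zero.1 (norm_le_zero_iff.1 h₀)
  have hstep : ∀ u ∈ Icc (-ε) ε, (∀ t ∈ Ico (-ε) u, |x t - x₀| ≤ 1) →
      |x u - x₀| ≤ K * C * ε := by
    intro u hu hbd
    have h₀ := norm_image_sub_le_of_norm_deriv_le_segment' (f := x) (f' := v) (C := K * C / 2)
      (a := -ε) (b := u) (fun t _ => (hx t).hasDerivWithinAt)
      (fun t ht => abs_velocity_le hε hK₀ hh hr hsupp hC hx hv hv₁ fun s hs hst =>
        hK _ (hbd s ⟨hs.1, hst.trans ht.2⟩))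
      u ⟨hu.1, le_rfl⟩
    rw [hstart, Real.norm_eq_abs] at h₀
    have : K * C / 2 * (u - -ε) ≤ K * C / 2 * (2 * ε) :=
      mul_le_mul_of_nonneg_left (by linarith [hu.2]) (by positivity)
    linarith
  suffices hall : ∀ u ∈ Icc (-ε) ε, |x u - x₀| < 1 from fun u hu =>
    hstep u hu fun t ht => (hall t ⟨ht.1, ht.2.le.trans hu.2⟩).le
  by_contra! hcon
  obtain ⟨u, hu, hu1⟩ := hcon
  have hcomp : IsCompact (Icc (-ε) ε ∩ {t | 1 ≤ |x t - x₀|}) :=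
    isCompact_Icc.inter_right (isClosed_le continuous_const (hxc.sub continuous_const).abs)
  obtain ⟨t, ⟨ht, ht1⟩, hleast⟩ := hcomp.exists_isLeast ⟨u, hu, hu1⟩
  have hlt := hstep t ht fun s hs => by
    by_contra! hs1
    exact absurd (hleast ⟨⟨hs.1, hs.2.le.trans ht.2⟩, hs1.le⟩) (not_le.2 hs.2)
  exact absurd ht1 (not_le.2 (hlt.trans_lt hsmall))

/-- After the impulse the velocity is close to `½ h(x₀) ∫ r`. -/
lemma abs_velocity_sub_le {h r x v : ℝ → ℝ} {ε η C x₀ u : ℝ} (hε : ε < 1)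
    (hh : Continuous h) (hr : Continuous r) (hsupp : Function.support r ⊆ Icc (-ε) ε)
    (hC : ∫ t, |r t| ≤ C) (hη₀ : 0 ≤ η)
    (hx : ∀ u, HasDerivAt x (v u) u) (hv : ∀ u, HasDerivAt v (r u / 2 * h (x u)) u)
    (hv₁ : v (-1) = 0) (hη : ∀ t ∈ Icc (-ε) ε, |h (x t) - h x₀| ≤ η) (hu : ε ≤ u) :
    |v u - h x₀ / 2 * ∫ t, r t| ≤ η * C / 2 := by
  have hxc : Continuous x := continuous_iff_continuousAt.2 fun u => (hx u).continuousAt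
  have hcs : HasCompactSupport r := HasCompactSupport.of_support_subset_isCompact isCompact_Icc hsupp
  have hint : Integrable fun t => η / 2 * |r t| :=
    (hr.abs.integrable_of_hasCompactSupport hcs.norm).const_mul _
  have hint₁ : Integrable fun t => h x₀ / 2 * r t :=
    (hr.integrable_of_hasCompactSupport hcs).const_mul _
  have hint₂ : Integrable fun t => r t / 2 * h (x t) := by
    have heq : (fun t => r t / 2 * h (x t)) = fun t => r t * (h (x t) / 2) := by ext t; ring
    rw [heq]
    exact (hr.mul ((hh.comp hxc).div_const 2)).integrable_of_hasCompactSupport hcs.mul_right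
  rw [velocity_eq_integral hh hr hx hv hv₁ u,
    intervalIntegral.integral_eq_integral_of_support_subset, ← integral_const_mul,
    ← integral_sub hint₂ hint₁, ← Real.norm_eq_abs]
  · calc ‖∫ t, (r t / 2 * h (x t) - h x₀ / 2 * r t)‖ ≤ ∫ t, η / 2 * |r t| := by
          refine norm_integral_le_of_norm_le hint (Eventually.of_forall fun t => ?_)
          by_cases h0 : r t = 0
          · simp [h0]
          · have hηt := hη t (hsupp h0)
            have heq : r t / 2 * h (x t) - h x₀ / 2 * r t = r t / 2 * (h (x t) - h x₀) := by ring
            rw [heq, Real.norm_eq_abs, abs_mul, abs_div, abs_two]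
            nlinarith [abs_nonneg (r t)]
      _ ≤ η * C / 2 := by
          rw [integral_const_mul]
          nlinarith
  · intro t ht
    have h0 : r t ≠ 0 := fun h0 => ht (by simp [h0])
    have := hsupp h0
    exact ⟨by linarith [this.1], this.2.trans hu⟩

/-- With initial conditions `N(-1) = 0`, `Ṅ(-1) = (a,b,0,0)`, the transverse component
`Nˣ_ε` of the Jacobi field converges distributionally to `½ a f'(x₀)(u₊ + θ(u))`. -/
theorem jacobi_Nx_distributional_limit_case1 (f : ℝ → ℝ) (hf : ContDiff ℝ (⊤ : ℕ∞) f)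
    (ρ : ℝ → ℝ → ℝ) (hρ : IsGenDeltaNet ρ) (x₀ a b : ℝ)
    (ε₀ : ℝ) (hε₀ : ε₀ ∈ Ioo (0:ℝ) 1) (x : ℝ → ℝ → ℝ)
    (hx : ∀ ε ∈ Ioo 0 ε₀, IsXSol1 f ρ x₀ ε (x ε))
    (Nu Nv Nx Ny : ℝ → ℝ → ℝ)
    (hN : ∀ ε ∈ Ioo 0 ε₀,
      (ContDiff ℝ (⊤ : ℕ∞) (Nu ε) ∧ ContDiff ℝ (⊤ : ℕ∞) (Nv ε) ∧
       ContDiff ℝ (⊤ : ℕ∞) (Nx ε) ∧ ContDiff ℝ (⊤ : ℕ∞) (Ny ε)) ∧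
      JacobiEqs f (ρ ε) (x ε) (Nu ε) (Nv ε) (Nx ε) (Ny ε) ∧
      (Nu ε (-1) = 0 ∧ Nv ε (-1) = 0 ∧ Nx ε (-1) = 0 ∧ Ny ε (-1) = 0) ∧
      (deriv (Nu ε) (-1) = a ∧ deriv (Nv ε) (-1) = b ∧
       deriv (Nx ε) (-1) = 0 ∧ deriv (Ny ε) (-1) = 0)) :
    ∀ φ : ℝ → ℝ, ContDiff ℝ (⊤ : ℕ∞) φ → HasCompactSupport φ →
      Tendsto (fun ε => ∫ u, Nx ε u * φ u) (nhdsWithin 0 (Ioo 0 ε₀))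
        (nhds ((1 / 2) * a * deriv f x₀ * ∫ u in Ioi (0:ℝ), (1 + u) * φ u)) := by
  intro φ hφ hφc
  obtain ⟨hρs, hρsupp, hρ1, C, hC⟩ := hρ
  have hh : Continuous (deriv f) := hf.deriv_of_smooth.continuous
  have hsub : Ioo 0 ε₀ ⊆ Ioo (0 : ℝ) 1 := Ioo_subset_Ioo_right hε₀.2.le
  have hmem : ∀ᶠ ε in nhdsWithin 0 (Ioo 0 ε₀), ε ∈ Ioo 0 ε₀ := self_mem_nhdsWithin
  have hid : Tendsto (fun ε : ℝ => ε) (nhdsWithin 0 (Ioo 0 ε₀)) (nhds 0) :=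
    tendsto_id.mono_left nhdsWithin_le_nhds
  have hlt : ∀ c : ℝ, 0 < c → ∀ᶠ ε in nhdsWithin 0 (Ioo 0 ε₀), ε < c :=
    fun c hc => hid.eventually_lt_const hc
  obtain ⟨K, hK⟩ : ∃ K, ∀ y, |y - x₀| ≤ 1 → |deriv f y| ≤ K := by
    obtain ⟨K, hK⟩ := (isCompact_closedBall x₀ 1).exists_bound_of_continuousOn hh.continuousOn
    exact ⟨K, fun y hy => hK y (by simpa [Real.dist_eq] using hy)⟩
  have hK₀ : 0 ≤ K := (abs_nonneg _).trans (hK x₀ (by simp))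
  have hsmall : ∀ c : ℝ, 0 < c → ∀ᶠ ε in nhdsWithin 0 (Ioo 0 ε₀), K * C * ε < c := by
    intro c hc
    have : Tendsto (fun ε => K * C * ε) (nhdsWithin 0 (Ioo 0 ε₀)) (nhds 0) := by
      simpa using hid.const_mul (K * C)
    exact this.eventually_lt_const hc
  have hxd : ∀ ε ∈ Ioo 0 ε₀, ∀ u, HasDerivAt (x ε) (deriv (x ε) u) u :=
    fun ε hε => (hx ε hε).1.hasDerivAt_of_smooth
  have hvd : ∀ ε ∈ Ioo 0 ε₀, ∀ u,
      HasDerivAt (deriv (x ε)) (ρ ε u / 2 * deriv f (x ε u)) u := fun ε hε u => by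
    rw [← (hx ε hε).2.1 u]
    exact (hx ε hε).1.deriv_of_smooth.hasDerivAt_of_smooth u
  have hρc : ∀ ε ∈ Ioo 0 ε₀, Continuous (ρ ε) := fun ε hε => (hρs ε (hsub hε)).continuous
  have hNeq : ∀ ε ∈ Ioo 0 ε₀, ∀ u, Nx ε u = a * (1 + u) * deriv (x ε) u := by
    intro ε hε
    obtain ⟨⟨hNu, -, hNx, -⟩, ⟨hNueq, -, hNxeq, -⟩, ⟨hNu₀, -, hNx₀, -⟩, ⟨hNu₁, -, hNx₁, -⟩⟩ :=
      hN ε hε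
    exact transverse_jacobi_eq hf (hρs ε (hsub hε))
      (HasCompactSupport.of_support_subset_isCompact isCompact_Icc (hρsupp ε (hsub hε)))
      (hx ε hε).1 (hx ε hε).2.1 (hx ε hε).2.2.2 hNu hNx hNueq hNxeq hNu₀ hNu₁ hNx₀ hNx₁
  have hdisp : ∀ ε ∈ Ioo 0 ε₀, K * C * ε < 1 → ∀ u ∈ Icc (-ε) ε, |x ε u - x₀| ≤ K * C * ε :=
    fun ε hε hs => abs_displacement_le (hsub hε).2 hK hh (hρc ε hε) (hρsupp ε (hsub hε))
      (hC ε (hsub hε)) hs (hxd ε hε) (hvd ε hε) (hx ε hε).2.2.1 (hx ε hε).2.2.2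
  have hlim_pos : ∀ u : ℝ, 0 < u → Tendsto (fun ε => deriv (x ε) u) (nhdsWithin 0 (Ioo 0 ε₀))
      (nhds (deriv f x₀ / 2)) := by
    intro u hu
    have hmass : Tendsto (fun ε => deriv f x₀ / 2 * ∫ t, ρ ε t) (nhdsWithin 0 (Ioo 0 ε₀))
        (nhds (deriv f x₀ / 2)) := by
      simpa using (hρ1.mono_left (nhdsWithin_mono 0 hsub)).const_mul (deriv f x₀ / 2)
    have hdiff : Tendsto (fun ε => deriv (x ε) u - deriv f x₀ / 2 * ∫ t, ρ ε t)
        (nhdsWithin 0 (Ioo 0 ε₀)) (nhds 0) := by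
      rw [Metric.tendsto_nhds]
      intro η hη
      have hC1 : 0 < |C| + 1 := by positivity
      have hη' : 0 < η / (|C| + 1) := by positivity
      obtain ⟨δ, hδ, hδη⟩ := Metric.continuousAt_iff.1 hh.continuousAt (η / (|C| + 1)) hη'
      filter_upwards [hmem, hsmall 1 one_pos, hsmall δ hδ, hlt u hu] with ε hε h1 h2 h3
      have hb := abs_velocity_sub_le (η := η / (|C| + 1)) (x₀ := x₀) (hsub hε).2 hh (hρc ε hε)
        (hρsupp ε (hsub hε)) (hC ε (hsub hε)) hη'.le (hxd ε hε) (hvd ε hε) (hx ε hε).2.2.2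
        (fun t ht => (hδη (by
          rw [Real.dist_eq]; exact (hdisp ε hε h1 t ht).trans_lt h2)).le) h3.le
      rw [dist_zero_right, Real.norm_eq_abs]
      refine hb.trans_lt ?_
      have hCle : η / (|C| + 1) * C ≤ η / (|C| + 1) * (|C| + 1) :=
        mul_le_mul_of_nonneg_left (by linarith [le_abs_self C]) hη'.le
      rw [div_mul_cancel₀ _ hC1.ne'] at hCle
      linarith
    simpa using hdiff.add hmass
  have hlim_neg : ∀ u : ℝ, u < 0 → Tendsto (fun ε => deriv (x ε) u) (nhdsWithin 0 (Ioo 0 ε₀))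
      (nhds 0) := by
    intro u hu
    refine tendsto_const_nhds.congr' ?_
    filter_upwards [hmem, hlt (-u) (by linarith)] with ε hε h1
    exact (velocity_eq_zero (hsub hε).2 hh (hρc ε hε) (hρsupp ε (hsub hε)) (hxd ε hε) (hvd ε hε)
      (hx ε hε).2.2.2 (by linarith)).symm
  have htarget : (1 / 2) * a * deriv f x₀ * ∫ u in Ioi (0 : ℝ), (1 + u) * φ u =
      ∫ u, (Ioi (0 : ℝ)).indicator (fun u => a * (1 + u) * (deriv f x₀ / 2) * φ u) u := by
    rw [integral_indicator measurableSet_Ioi, ← integral_const_mul]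
    congr 1 with u
    ring
  rw [htarget]
  refine tendsto_integral_filter_of_dominated_convergence
    (fun u => |a * (1 + u)| * (K * C / 2) * |φ u|) ?_ ?_ ?_ ?_
  · filter_upwards [hmem] with ε hε
    exact ((hN ε hε).1.2.2.1.continuous.mul hφ.continuous).aestronglyMeasurable
  · filter_upwards [hmem, hsmall 1 one_pos] with ε hε h1
    refine Eventually.of_forall fun u => ?_
    rw [hNeq ε hε, norm_mul, norm_mul]
    simp only [Real.norm_eq_abs]
    gcongr
    exact abs_velocity_le (hsub hε).2 hK₀ hh (hρc ε hε) (hρsupp ε (hsub hε)) (hC ε (hsub hε))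
      (hxd ε hε) (hvd ε hε) (hx ε hε).2.2.2
      fun t ht _ => hK _ ((hdisp ε hε h1 t ht).trans h1.le)
  · refine Continuous.integrable_of_hasCompactSupport ?_ hφc.norm.mul_left
    have := hφ.continuous
    fun_prop
  · have hne : ∀ᵐ u : ℝ, u ≠ 0 := by simp [ae_iff]
    filter_upwards [hne] with u hu
    have hcongr : (fun ε => a * (1 + u) * deriv (x ε) u * φ u) =ᶠ[nhdsWithin 0 (Ioo 0 ε₀)]
        fun ε => Nx ε u * φ u := by
      filter_upwards [hmem] with ε hε
      rw [hNeq ε hε]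
    refine Tendsto.congr' hcongr ?_
    rcases lt_or_gt_of_ne hu with hu | hu
    · rw [indicator_of_notMem (by simpa using hu.le)]
      simpa using ((hlim_neg u hu).const_mul (a * (1 + u))).mul_const (φ u)
    · rw [indicator_of_mem (by simpa using hu)]
      exact ((hlim_pos u hu).const_mul (a * (1 + u))).mul_const (φ u)
end

section
/- Let f : ℝ → ℝ be smooth, (ρ_ε)_{ε∈(0,1)} a generalized delta net, x_ε (ε < ε₀) the solution of ẍ_ε = ½ f'(x_ε) ρ_ε with x_ε(−1) = x₀, ẋ_ε(−1) = 0, and let N_ε = (N^u_ε, N^v_ε, N^x_ε, N^y_ε) be the solution of the regularized Jacobi system with initial conditions N^a_ε(−1) = 0 for all a and (Ṅ^u_ε, Ṅ^v_ε, Ṅ^x_ε, Ṅ^y_ε)(−1) = (a, b, 0, 0). Then N^v_ε converges distributionally to b(1+u) + a[f(x₀)δ(u) + ¼ f'(x₀)² (θ(u) + u₊)]: for every smooth compactly supported φ : ℝ → ℝ, ∫_ℝ N^v_ε(u) φ(u) du → b ∫_ℝ (1+u) φ(u) du + a f(x₀) φ(0) + ¼ a f'(x₀)² ∫_0^∞ (1+u)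 φ(u) du as ε → 0; i.e. the deviation field suffers a kink, a jump and a δ-like pulse in the v-direction at the shock. -/
open MeasureTheory Filter Set

/-- A twice differentiable function is determined by its second derivative, its value and its
derivative at one point. -/
theorem eq_of_deriv_deriv_eq {g h : ℝ → ℝ} (hg : ContDiff ℝ 2 g) (hh : ContDiff ℝ 2 h)
    (hgh : ∀ u, deriv (deriv g) u = deriv (deriv h) u) {t : ℝ} (h0 : g t = h t)
    (h1 : deriv g t = deriv h t) : g = h := by
  have hg' : Differentiable ℝ (deriv g) :=
    ((contDiff_succ_iff_deriv (n := 1)).1 hg).2.2.differentiable one_ne_zero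
  have hh' : Differentiable ℝ (deriv h) :=
    ((contDiff_succ_iff_deriv (n := 1)).1 hh).2.2.differentiable one_ne_zero
  have eq_of_deriv : ∀ {g h : ℝ → ℝ}, Differentiable ℝ g → Differentiable ℝ h →
      (∀ u, deriv g u = deriv h u) → g t = h t → ∀ u, g u = h u := by
    intro g h hg hh hgh h0 u
    have := is_const_of_deriv_eq_zero (hg.sub hh)
      (fun u => by rw [deriv_sub (hg u) (hh u), hgh, sub_self]) u t
    simpa [h0, sub_eq_zero] using this
  exact funext (eq_of_deriv (hg.differentiable two_ne_zero) (hh.differentiable two_ne_zero)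
    (eq_of_deriv hg' hh' hgh h1) h0)

/-- The linear equation `m'' = q m` with `q` bounded and vanishing initial data has only the zero
solution. -/
theorem eq_zero_of_second_order_linear_s12 {q m m' : ℝ → ℝ} {K : ℝ} (hq : ∀ t, |q t| ≤ K)
    (hm : ∀ t, HasDerivAt m (m' t) t) (hm' : ∀ t, HasDerivAt m' (q t * m t) t)
    {t₀ : ℝ} (h0 : m t₀ = 0) (h1 : m' t₀ = 0) (t : ℝ) : m t = 0 := by
  have hK : 0 ≤ K := (abs_nonneg _).trans (hq t₀)
  have hlip : ∀ t, LipschitzOnWith (max 1 K.toNNReal)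
      (fun p : ℝ × ℝ => (p.2, q t * p.1)) univ := by
    intro t
    rw [lipschitzOnWith_univ]
    refine LipschitzWith.prodMk LipschitzWith.prod_snd ?_
    refine LipschitzWith.of_dist_le_mul fun p r => ?_
    rw [Real.dist_eq, ← mul_sub, abs_mul, Real.coe_toNNReal K hK]
    refine mul_le_mul (hq t) ?_ (abs_nonneg _) hK
    rw [← Real.dist_eq, Prod.dist_eq]
    exact le_max_left _ _
  have key := ODE_solution_unique_univ (v := fun t (p : ℝ × ℝ) => (p.2, q t * p.1))
    (s := fun _ => univ) (f := fun t => (m t, m' t)) (g := fun _ => (0, 0)) (t₀ := t₀) hlip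
    (fun t => ⟨(hm t).prodMk (hm' t), mem_univ _⟩)
    (fun t => ⟨by simpa [← Prod.zero_eq_mk] using hasDerivAt_const t (0 : ℝ × ℝ), mem_univ _⟩)
    (by simp [h0, h1])
  exact congrArg Prod.fst (congrFun key t)

/-- Integrating against a generalized delta net yields the value at `0`, for integrands depending on
the parameter, provided they converge along every selection of points in the supports. -/
theorem IsGenDeltaNet.tendsto_integral_mul {ρ : ℝ → ℝ → ℝ} (hρ : IsGenDeltaNet ρ) {ε₀ : ℝ}
    (hε₀ : ε₀ ∈ Ioo (0:ℝ) 1) {g : ℝ → ℝ → ℝ} {L : ℝ}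
    (hg : ∀ ε ∈ Ioo 0 ε₀, Continuous (g ε))
    (hL : ∀ s : ℝ → ℝ, (∀ ε ∈ Ioo 0 ε₀, |s ε| ≤ ε) →
      Tendsto (fun ε => g ε (s ε)) (nhdsWithin 0 (Ioo 0 ε₀)) (nhds L)) :
    Tendsto (fun ε => ∫ u, ρ ε u * g ε u) (nhdsWithin 0 (Ioo 0 ε₀)) (nhds L) := by
  obtain ⟨hsm, hsupp, h1, C, hC⟩ := hρ
  have hsub : Ioo 0 ε₀ ⊆ Ioo (0:ℝ) 1 := Ioo_subset_Ioo_right hε₀.2.le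
  have hcs : ∀ ε ∈ Ioo 0 ε₀, HasCompactSupport (ρ ε) := fun ε hε =>
    HasCompactSupport.of_support_subset_isCompact isCompact_Icc (hsupp ε (hsub hε))
  have hmax : ∀ ε : ℝ, ∃ s : ℝ, ε ∈ Ioo 0 ε₀ →
      (|s| ≤ ε ∧ ∀ u ∈ Icc (-ε) ε, |g ε u - L| ≤ |g ε s - L|) := by
    intro ε
    by_cases hε : ε ∈ Ioo 0 ε₀
    · obtain ⟨s, hs, hs'⟩ := isCompact_Icc.exists_isMaxOn
        (nonempty_Icc.2 (by linarith [hε.1] : -ε ≤ ε))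
        ((hg ε hε).sub continuous_const).abs.continuousOn (f := fun u => |g ε u - L|)
      exact ⟨s, fun _ => ⟨abs_le.2 hs, fun u hu => hs' hu⟩⟩
    · exact ⟨0, fun h => absurd h hε⟩
  choose s hs using hmax
  have hlim := hL s fun ε hε => (hs ε hε).1
  have hbound : ∀ ε ∈ Ioo 0 ε₀,
      |(∫ u, ρ ε u * g ε u) - L * ∫ u, ρ ε u| ≤ C * |g ε (s ε) - L| := by
    intro ε hε
    have hρc := (hsm ε (hsub hε)).continuous
    have hi1 : Integrable (fun u => ρ ε u * g ε u) :=
      (hρc.mul (hg ε hε)).integrable_of_hasCompactSupport (hcs ε hε).mul_right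
    have hi2 : Integrable (ρ ε) := hρc.integrable_of_hasCompactSupport (hcs ε hε)
    rw [← integral_const_mul, ← integral_sub hi1 (hi2.const_mul L)]
    calc |∫ u, (ρ ε u * g ε u - L * ρ ε u)|
        ≤ ∫ u, |ρ ε u| * |g ε (s ε) - L| := by
          rw [← Real.norm_eq_abs (∫ u, _)]
          refine norm_integral_le_of_norm_le (hi2.abs.mul_const _) (ae_of_all _ fun u => ?_)
          rw [Real.norm_eq_abs, show ρ ε u * g ε u - L * ρ ε u = ρ ε u * (g ε u - L) by ring,
            abs_mul]
          by_cases hu : ρ ε u = 0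
          · simp [hu]
          · exact mul_le_mul_of_nonneg_left ((hs ε hε).2 u (hsupp ε (hsub hε) hu)) (abs_nonneg _)
      _ ≤ C * |g ε (s ε) - L| := by
          rw [integral_mul_const]
          exact mul_le_mul_of_nonneg_right (hC ε (hsub hε)) (abs_nonneg _)
  have hz : Tendsto (fun ε => (∫ u, ρ ε u * g ε u) - L * ∫ u, ρ ε u)
      (nhdsWithin 0 (Ioo 0 ε₀)) (nhds 0) := by
    refine squeeze_zero_norm' (a := fun ε => C * |g ε (s ε) - L|) ?_ ?_
    · filter_upwards [self_mem_nhdsWithin] with ε hε using hbound ε hε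
    · simpa using ((hlim.sub_const L).abs).const_mul C
  simpa using hz.add ((h1.mono_left (nhdsWithin_mono 0 hsub)).const_mul L)

/-- Third derivative of the background geodesic. -/
theorem hasDerivAt_geodesic_force {f r x : ℝ → ℝ} (hf : ContDiff ℝ (⊤ : ℕ∞) f)
    (hr : ContDiff ℝ (⊤ : ℕ∞) r) (hx : ContDiff ℝ (⊤ : ℕ∞) x) (u : ℝ) :
    HasDerivAt (fun t => (r t / 2) * deriv f (x t))
      ((deriv r u / 2) * deriv f (x u) +
        (r u / 2) * (deriv (deriv f) (x u) * deriv x u)) u := by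
  have hf' : ContDiff ℝ (⊤ : ℕ∞) (deriv f) := (contDiff_infty_iff_deriv.1 hf).2
  have h1 := (hf'.differentiable (by simp) (x u)).hasDerivAt
  have h2 := (hx.differentiable (by simp) u).hasDerivAt
  have h3 := (hr.differentiable (by simp) u).hasDerivAt
  exact (h3.div_const 2).mul (h1.comp u h2)

/-- The `x`-component of the Jacobi field with `N(-1) = 0` and `Ṅˣ(-1) = 0` is the corresponding
component of the tangential Jacobi field `a (1 + u) γ̇`. -/
theorem jacobi_Nx_eq {f r x Nx : ℝ → ℝ} {a : ℝ} (hf : ContDiff ℝ (⊤ : ℕ∞) f)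
    (hr : ContDiff ℝ (⊤ : ℕ∞) r) (hrc : HasCompactSupport r)
    (hx : ContDiff ℝ (⊤ : ℕ∞) x) (hxx : ∀ u, deriv (deriv x) u = (r u / 2) * deriv f (x u))
    (hx1 : deriv x (-1) = 0) (hNx : ContDiff ℝ (⊤ : ℕ∞) Nx)
    (hJ : ∀ u, deriv (deriv Nx) u =
      (a * deriv f (x u) + (1 / 2) * Nx u * deriv (deriv f) (x u)) * r u
      + (1 / 2) * deriv f (x u) * (a * (1 + u)) * deriv r u)
    (hNx0 : Nx (-1) = 0) (hNx1 : deriv Nx (-1) = 0) (u : ℝ) :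
    Nx u = a * (1 + u) * deriv x u := by
  have hx' : ContDiff ℝ (⊤ : ℕ∞) (deriv x) := (contDiff_infty_iff_deriv.1 hx).2
  have hN' : ContDiff ℝ (⊤ : ℕ∞) (deriv Nx) := (contDiff_infty_iff_deriv.1 hNx).2
  have hf'' : ContDiff ℝ (⊤ : ℕ∞) (deriv (deriv f)) :=
    (contDiff_infty_iff_deriv.1 (contDiff_infty_iff_deriv.1 hf).2).2
  obtain ⟨K, hK⟩ := (hrc.mul_left (f' := r)
    (f := fun t => (1 / 2) * deriv (deriv f) (x t))).exists_bound_of_continuous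
      ((continuous_const.mul (hf''.continuous.comp hx.continuous)).mul hr.continuous)
  have hw : ∀ t, HasDerivAt (fun t : ℝ => a * (1 + t)) a t := fun t => by
    simpa using ((hasDerivAt_id t).const_add 1).const_mul a
  have hX : ∀ t, HasDerivAt (deriv x) ((r t / 2) * deriv f (x t)) t := fun t => by
    rw [← hxx]; exact (hx'.differentiable (by simp) t).hasDerivAt
  refine sub_eq_zero.1 (eq_zero_of_second_order_linear_s12 (K := K)
    (q := fun t => (1 / 2) * deriv (deriv f) (x t) * r t)
    (m := fun t => Nx t - a * (1 + t) * deriv x t)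
    (m' := fun t => deriv Nx t - (a * deriv x t + a * (1 + t) * ((r t / 2) * deriv f (x t))))
    hK (fun t => ?_) (fun t => ?_) (t₀ := -1) (by simp [hNx0]) (by simp [hNx1, hx1]) u)
  · exact (hNx.differentiable (by simp) t).hasDerivAt.sub ((hw t).mul (hX t))
  · refine ((hN'.differentiable (by simp) t).hasDerivAt.sub (((hX t).const_mul a).add
      ((hw t).mul (hasDerivAt_geodesic_force hf hr hx t)))).congr_deriv ?_
    rw [hJ]
    ring

/-- The `v`-component of the Jacobi field is the tangential one `a (1 + u) v̇` with
`v̇ = f(x) ρ + ẋ²`, up to a multiple of the parallel field `∂_v`. -/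
theorem jacobi_Nv_eq {f r x Nu Nv Nx Ny : ℝ → ℝ} {a b : ℝ} (hf : ContDiff ℝ (⊤ : ℕ∞) f)
    (hr : ContDiff ℝ (⊤ : ℕ∞) r) (hrc : HasCompactSupport r) (hr1 : -1 ∉ tsupport r)
    (hx : ContDiff ℝ (⊤ : ℕ∞) x) (hxx : ∀ u, deriv (deriv x) u = (r u / 2) * deriv f (x u))
    (hx1 : deriv x (-1) = 0) (hNu : ContDiff ℝ (⊤ : ℕ∞) Nu) (hNv : ContDiff ℝ (⊤ : ℕ∞) Nv)
    (hNx : ContDiff ℝ (⊤ : ℕ∞) Nx) (hJ : JacobiEqs f r x Nu Nv Nx Ny)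
    (hNu0 : Nu (-1) = 0) (hNv0 : Nv (-1) = 0) (hNx0 : Nx (-1) = 0)
    (hNu1 : deriv Nu (-1) = a) (hNv1 : deriv Nv (-1) = b) (hNx1 : deriv Nx (-1) = 0) (u : ℝ) :
    Nv u = a * (1 + u) * f (x u) * r u + a * (1 + u) * deriv x u ^ 2 + b * (1 + u) := by
  obtain ⟨hJu, -, hJx, hJv⟩ := hJ
  have hw : ∀ a t, HasDerivAt (fun t : ℝ => a * (1 + t)) a t := fun a t => by
    simpa using ((hasDerivAt_id t).const_add 1).const_mul a
  have hwd : ∀ a, deriv (fun t : ℝ => a * (1 + t)) = fun _ => a := fun a =>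
    funext fun t => (hw a t).deriv
  have h2 : (2 : WithTop ℕ∞) ≤ ((⊤ : ℕ∞) : WithTop ℕ∞) := WithTop.coe_le_coe.2 (le_top : (2 : ℕ∞) ≤ ⊤)
  obtain rfl : Nu = fun t => a * (1 + t) :=
    eq_of_deriv_deriv_eq (hNu.of_le h2) (by fun_prop) (t := -1) (fun t => by simp [hJu, hwd])
      (by simp [hNu0]) (by simp [hNu1, hwd])
  have hNx' : ∀ t, Nx t = a * (1 + t) * deriv x t :=
    jacobi_Nx_eq hf hr hrc hx hxx hx1 hNx (fun t => by rw [hJx, hwd]) hNx0 hNx1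
  have hx' : ContDiff ℝ (⊤ : ℕ∞) (deriv x) := (contDiff_infty_iff_deriv.1 hx).2
  have hX : ∀ t, HasDerivAt (deriv x) ((r t / 2) * deriv f (x t)) t := fun t => by
    rw [← hxx]; exact (hx'.differentiable (by simp) t).hasDerivAt
  set S : ℝ → ℝ := fun t => a * (1 + t) * f (x t) * r t with hS
  have hSc : ContDiff ℝ (⊤ : ℕ∞) S := by rw [hS]; fun_prop
  have hS' : ContDiff ℝ (⊤ : ℕ∞) (deriv S) := (contDiff_infty_iff_deriv.1 hSc).2
  have hr0 : r =ᶠ[nhds (-1)] 0 := notMem_tsupport_iff_eventuallyEq.1 hr1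
  have hS0 : S =ᶠ[nhds (-1)] fun _ => 0 := by
    filter_upwards [hr0] with t ht
    simp [hS, ht]
  set P : ℝ → ℝ := fun t => a * (1 + t) * (2 * (deriv x t * ((r t / 2) * deriv f (x t)))) with hP
  have hP' : ∀ t, HasDerivAt P (a * (2 * (deriv x t * ((r t / 2) * deriv f (x t)))) +
      a * (1 + t) * (2 * ((r t / 2) * deriv f (x t) * ((r t / 2) * deriv f (x t)) +
        deriv x t * ((deriv r t / 2) * deriv f (x t) +
        (r t / 2) * (deriv (deriv f) (x t) * deriv x t))))) t := fun t =>
    (hw a t).mul (((hX t).mul (hasDerivAt_geodesic_force hf hr hx t)).const_mul 2)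
  have hNP : (fun t => Nx t * deriv f (x t) * r t) = P := funext fun t => by
    rw [hNx', hP]; ring
  have hH : ∀ t, HasDerivAt (fun t => S t + a * (1 + t) * deriv x t ^ 2 + b * (1 + t))
      (deriv S t + (a * deriv x t ^ 2 + P t) + b) t := fun t =>
    (((hSc.differentiable (by simp) t).hasDerivAt.add ((hw a t).mul ((hX t).pow 2))).add
      (hw b t)).congr_deriv (by simp only [hP, Pi.pow_apply]; push_cast; ring)
  have hHd := funext fun t => (hH t).deriv
  have hH' : ∀ t, HasDerivAt (fun t => deriv S t + (a * deriv x t ^ 2 + P t) + b) _ t := fun t =>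
    ((hS'.differentiable (by simp) t).hasDerivAt.add
      ((((hX t).pow 2).const_mul a).add (hP' t))).add_const b
  refine congrFun (eq_of_deriv_deriv_eq (h := fun t => S t + a * (1 + t) * deriv x t ^ 2 +
    b * (1 + t)) (t := -1) (hNv.of_le h2) (ContDiff.of_le (by fun_prop) h2) (fun t => ?_) ?_ ?_) u
  · rw [hHd, (hH' t).deriv, hJv, hNP, (hP' t).deriv, hNx', hxx]
    push_cast
    ring
  · simp [hNv0, hS0.eq_of_nhds]
  · rw [hHd, hNv1]
    simp [hP, hx1, hS0.deriv_eq]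

/-- A priori bounds on the background geodesic: it is constant before the pulse, stays close to its
initial value during the pulse, and has bounded, eventually constant velocity. -/
theorem geodesic_bounds {f r x : ℝ → ℝ} {x₀ ε C K : ℝ} (hf : ContDiff ℝ (⊤ : ℕ∞) f)
    (hr : Continuous r) (hε : ε ∈ Ioo (0:ℝ) 1) (hrs : Function.support r ⊆ Icc (-ε) ε)
    (hC : ∫ t, |r t| ≤ C) (hK : ∀ y, |y - x₀| ≤ 1 → |deriv f y| ≤ K)
    (hx : ContDiff ℝ (⊤ : ℕ∞) x) (hxx : ∀ u, deriv (deriv x) u = (r u / 2) * deriv f (x u))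
    (hx0 : x (-1) = x₀) (hx1 : deriv x (-1) = 0) (hsmall : K * C * (2 * ε) < 1) :
    (∀ u ≤ -ε, deriv x u = 0) ∧ (∀ u, |u| ≤ ε → |x u - x₀| ≤ K * C * (2 * ε)) ∧
    (∀ u, |deriv x u| ≤ K * C) ∧
    (∀ u, ε ≤ u → deriv x u = ∫ t, r t * (deriv f (x t) / 2)) := by
  obtain ⟨hε0, hε1⟩ := hε
  have hx' : ContDiff ℝ (⊤ : ℕ∞) (deriv x) := (contDiff_infty_iff_deriv.1 hx).2
  have hf' : ContDiff ℝ (⊤ : ℕ∞) (deriv f) := (contDiff_infty_iff_deriv.1 hf).2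
  have hcont : Continuous fun t => r t * (deriv f (x t) / 2) :=
    hr.mul ((hf'.continuous.comp hx.continuous).div_const 2)
  have hrs' : Function.support r ⊆ Ioo (-ε) ε := by
    rw [← interior_Icc]
    exact interior_maximal hrs (hr.isOpen_support)
  have hri : Integrable r := hr.integrable_of_hasCompactSupport
    (HasCompactSupport.of_support_subset_isCompact isCompact_Icc hrs)
  have hK0 : 0 ≤ K := (abs_nonneg _).trans (hK x₀ (by simp))
  have hC0 : 0 ≤ C := (integral_nonneg fun t => abs_nonneg _).trans hC
  have hvel : ∀ u, deriv x u = ∫ t in (-1)..u, r t * (deriv f (x t) / 2) := fun u => by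
    rw [intervalIntegral.integral_eq_sub_of_hasDerivAt (f := deriv x)
      (fun t _ => ?_) (hcont.intervalIntegrable _ _), hx1, sub_zero]
    rw [show r t * (deriv f (x t) / 2) = deriv (deriv x) t by rw [hxx]; ring]
    exact (hx'.differentiable (by simp) t).hasDerivAt
  have hbefore : ∀ u ≤ -ε, deriv x u = 0 := fun u hu => by
    rw [hvel, intervalIntegral.integral_congr (g := fun _ => (0 : ℝ)), intervalIntegral.integral_zero]
    intro t ht
    have ht' : t ≤ -ε := ht.2.trans (max_le (by linarith) hu)
    have : r t = 0 := by_contra fun h => absurd (hrs' h).1 (not_lt.2 ht')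
    simp [this]
  have hpos : ∀ u ≤ -ε, x u = x₀ := fun u hu => by
    have : ∫ t in (-1)..u, deriv x t = x u - x (-1) :=
      intervalIntegral.integral_deriv_eq_sub (fun t _ => hx.differentiable (by simp) t)
        (hx'.continuous.intervalIntegrable _ _)
    rw [intervalIntegral.integral_congr (g := fun _ => (0 : ℝ)) (fun t ht => hbefore t
      (ht.2.trans (max_le (by linarith) hu))), intervalIntegral.integral_zero, hx0] at this
    linarith
  have hvelb : ∀ u, (∀ t ≤ u, |x t - x₀| ≤ 1) → |deriv x u| ≤ K * C := by
    intro u hu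
    rcases le_total u (-ε) with h | h
    · rw [hbefore u h, abs_zero]; positivity
    have h1 : -1 ≤ u := by linarith
    rw [hvel u, intervalIntegral.integral_of_le h1]
    calc |∫ t in Ioc (-1) u, r t * (deriv f (x t) / 2)| ≤ ∫ t in Ioc (-1) u, K * |r t| := by
          rw [← Real.norm_eq_abs (∫ t in _, _)]
          refine norm_integral_le_of_norm_le (hri.abs.const_mul K).integrableOn
            (ae_restrict_of_forall_mem measurableSet_Ioc fun t ht => ?_)
          rw [Real.norm_eq_abs, abs_mul, mul_comm, abs_div, abs_two]
          have := hK _ (hu t ht.2)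
          gcongr
          linarith [abs_nonneg (deriv f (x t))]
      _ ≤ ∫ t, K * |r t| := setIntegral_le_integral (hri.abs.const_mul K)
          (ae_of_all _ fun t => by positivity)
      _ ≤ K * C := by
          rw [integral_const_mul]
          exact mul_le_mul_of_nonneg_left hC hK0
  have hdist : ∀ u ≤ ε, (∀ t < u, |x t - x₀| ≤ 1) → |x u - x₀| ≤ K * C * (2 * ε) := by
    intro u hu ht
    rcases le_total u (-ε) with h | h
    · rw [hpos u h, sub_self, abs_zero]; positivity
    have := norm_image_sub_le_of_norm_deriv_le_segment' (f := x) (f' := deriv x) (a := -ε) (b := u)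
      (C := K * C) (fun t _ => (hx.differentiable (by simp) t).hasDerivAt.hasDerivWithinAt)
      (fun t htm => hvelb t fun s hs => ht s (hs.trans_lt htm.2)) u (right_mem_Icc.2 h)
    rw [hpos (-ε) le_rfl] at this
    refine this.trans (mul_le_mul_of_nonneg_left (by linarith) (by positivity))
  have hclose : ∀ u ≤ ε, |x u - x₀| ≤ 1 := by
    by_contra! hcon
    obtain ⟨u, hu, hu1⟩ := hcon
    have hxc : Continuous fun t => |x t - x₀| := (hx.continuous.sub continuous_const).abs
    have hcomp : IsCompact (Icc (-ε) u ∩ {t | 1 ≤ |x t - x₀|}) :=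
      isCompact_Icc.inter_right (isClosed_le continuous_const hxc)
    have hlow : ∀ t, 1 ≤ |x t - x₀| → -ε ≤ t := fun t ht => by
      by_contra! h
      rw [hpos t h.le, sub_self, abs_zero] at ht
      linarith
    obtain ⟨s, ⟨hs, hs1⟩, hsl⟩ :=
      hcomp.exists_isLeast ⟨u, right_mem_Icc.2 (hlow u hu1.le), hu1.le⟩
    have := hdist s (hs.2.trans hu) fun t ht => by
      by_contra! h
      exact absurd (hsl ⟨⟨hlow t h.le, ht.le.trans hs.2⟩, h.le⟩) (not_le.2 ht)
    exact absurd (hs1.trans this) (not_le.2 hsmall)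
  have hafter : ∀ u, ε ≤ u → deriv x u = ∫ t, r t * (deriv f (x t) / 2) := fun u hu => by
    rw [hvel, intervalIntegral.integral_eq_integral_of_support_subset]
    intro t ht
    have := hrs' (left_ne_zero_of_mul ht)
    exact ⟨by linarith [this.1], by linarith [this.2]⟩
  refine ⟨hbefore, fun u hu => ?_, fun u => ?_, hafter⟩
  · exact hdist u (abs_le.1 hu).2 fun t ht => hclose t (ht.le.trans (abs_le.1 hu).2)
  · rcases le_total u ε with h | h
    · exact hvelb u fun t ht => hclose t (ht.trans h)
    · rw [hafter u h, ← hafter ε le_rfl]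
      exact hvelb ε hclose

/-- With initial conditions `N(-1) = 0`, `Ṅ(-1) = (a,b,0,0)`, the `v`-component `Nᵛ_ε` of
the Jacobi field converges distributionally to
`b(1+u) + a[f(x₀)δ(u) + ¼ f'(x₀)²(θ(u) + u₊)]`: a kink, a jump and a δ-like pulse. -/
theorem jacobi_Nv_distributional_limit_case1 (f : ℝ → ℝ) (hf : ContDiff ℝ (⊤ : ℕ∞) f)
    (ρ : ℝ → ℝ → ℝ) (hρ : IsGenDeltaNet ρ) (x₀ a b : ℝ)
    (ε₀ : ℝ) (hε₀ : ε₀ ∈ Ioo (0:ℝ) 1) (x : ℝ → ℝ → ℝ)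
    (hx : ∀ ε ∈ Ioo 0 ε₀, IsXSol1 f ρ x₀ ε (x ε))
    (Nu Nv Nx Ny : ℝ → ℝ → ℝ)
    (hN : ∀ ε ∈ Ioo 0 ε₀,
      (ContDiff ℝ (⊤ : ℕ∞) (Nu ε) ∧ ContDiff ℝ (⊤ : ℕ∞) (Nv ε) ∧
       ContDiff ℝ (⊤ : ℕ∞) (Nx ε) ∧ ContDiff ℝ (⊤ : ℕ∞) (Ny ε)) ∧
      JacobiEqs f (ρ ε) (x ε) (Nu ε) (Nv ε) (Nx ε) (Ny ε) ∧
      (Nu ε (-1) = 0 ∧ Nv ε (-1) = 0 ∧ Nx ε (-1) = 0 ∧ Ny ε (-1) = 0) ∧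
      (deriv (Nu ε) (-1) = a ∧ deriv (Nv ε) (-1) = b ∧
       deriv (Nx ε) (-1) = 0 ∧ deriv (Ny ε) (-1) = 0)) :
    ∀ φ : ℝ → ℝ, ContDiff ℝ (⊤ : ℕ∞) φ → HasCompactSupport φ →
      Tendsto (fun ε => ∫ u, Nv ε u * φ u) (nhdsWithin 0 (Ioo 0 ε₀))
        (nhds (b * (∫ u, (1 + u) * φ u) + a * f x₀ * φ 0
          + (1 / 4) * a * (deriv f x₀) ^ 2 * ∫ u in Ioi (0:ℝ), (1 + u) * φ u)) := by
  intro φ hφ hφc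
  have hρ' := hρ
  obtain ⟨hsm, hsupp, -, C, hC⟩ := hρ'
  have hsub : Ioo 0 ε₀ ⊆ Ioo (0:ℝ) 1 := Ioo_subset_Ioo_right hε₀.2.le
  set l := nhdsWithin (0:ℝ) (Ioo 0 ε₀)
  have hmem : ∀ᶠ ε in l, ε ∈ Ioo 0 ε₀ := self_mem_nhdsWithin
  have hl0 : Tendsto (fun ε : ℝ => ε) l (nhds 0) := tendsto_id.mono_left nhdsWithin_le_nhds
  have hf' : ContDiff ℝ (⊤ : ℕ∞) (deriv f) := (contDiff_infty_iff_deriv.1 hf).2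
  have hcs : ∀ ε ∈ Ioo 0 ε₀, HasCompactSupport (ρ ε) := fun ε hε =>
    HasCompactSupport.of_support_subset_isCompact isCompact_Icc (hsupp ε (hsub hε))
  have hts : ∀ ε ∈ Ioo 0 ε₀, (-1:ℝ) ∉ tsupport (ρ ε) := fun ε hε h => by
    have := (closure_minimal (hsupp ε (hsub hε)) isClosed_Icc h).1
    linarith [(hsub hε).2]
  obtain ⟨K, hK⟩ := (isCompact_closedBall x₀ 1).exists_bound_of_continuousOn
    hf'.continuous.continuousOn
  have hlin : Tendsto (fun ε : ℝ => K * C * (2 * ε)) l (nhds 0) := by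
    simpa using (hl0.const_mul 2).const_mul (K * C)
  have hbounds : ∀ᶠ ε in l, (∀ u ≤ -ε, deriv (x ε) u = 0) ∧
      (∀ u, |u| ≤ ε → |x ε u - x₀| ≤ K * C * (2 * ε)) ∧ (∀ u, |deriv (x ε) u| ≤ K * C) ∧
      (∀ u, ε ≤ u → deriv (x ε) u = ∫ t, ρ ε t * (deriv f (x ε t) / 2)) := by
    filter_upwards [hmem, hlin.eventually_lt_const one_pos] with ε hε hsmall
    obtain ⟨h1, h2, h3, h4⟩ := hx ε hε
    exact geodesic_bounds hf (hsm ε (hsub hε)).continuous (hsub hε) (hsupp ε (hsub hε))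
      (hC ε (hsub hε)) (fun y hy => hK y (by rwa [Metric.mem_closedBall, Real.dist_eq]))
      h1 h2 h3 h4 hsmall
  have hsel0 : ∀ s : ℝ → ℝ, (∀ ε ∈ Ioo 0 ε₀, |s ε| ≤ ε) → Tendsto s l (nhds 0) := fun s hs =>
    squeeze_zero_norm' (by filter_upwards [hmem] with ε hε using hs ε hε) hl0
  have hselx : ∀ s : ℝ → ℝ, (∀ ε ∈ Ioo 0 ε₀, |s ε| ≤ ε) →
      Tendsto (fun ε => x ε (s ε)) l (nhds x₀) := fun s hs => by
    rw [tendsto_iff_norm_sub_tendsto_zero]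
    refine squeeze_zero' (Eventually.of_forall fun _ => norm_nonneg _) ?_ hlin
    filter_upwards [hmem, hbounds] with ε hε hb using hb.2.1 _ (hs ε hε)
  have hxc : ∀ ε ∈ Ioo 0 ε₀, Continuous (x ε) := fun ε hε => (hx ε hε).1.continuous
  have hxc' : ∀ ε ∈ Ioo 0 ε₀, Continuous (deriv (x ε)) := fun ε hε =>
    (contDiff_infty_iff_deriv.1 (hx ε hε).1).2.continuous
  have hvel : Tendsto (fun ε => ∫ t, ρ ε t * (deriv f (x ε t) / 2)) l (nhds (deriv f x₀ / 2)) :=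
    hρ.tendsto_integral_mul hε₀ (g := fun ε t => deriv f (x ε t) / 2)
      (fun ε hε => (hf'.continuous.comp (hxc ε hε)).div_const 2)
      (fun s hs => ((hf'.continuous.tendsto x₀).comp (hselx s hs)).div_const 2)
  have hpulse : Tendsto (fun ε => ∫ u, ρ ε u * (a * (1 + u) * f (x ε u) * φ u)) l
      (nhds (a * f x₀ * φ 0)) := by
    refine hρ.tendsto_integral_mul hε₀ (g := fun ε u => a * (1 + u) * f (x ε u) * φ u)
      (fun ε hε => ?_) (fun s hs => ?_)
    · have := hf.continuous.comp (hxc ε hε)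
      exact ((continuous_const.mul (continuous_const.add continuous_id)).mul this).mul hφ.continuous
    · simpa using (((((hsel0 s hs).const_add 1).const_mul a).mul
        ((hf.continuous.tendsto x₀).comp (hselx s hs))).mul
        ((hφ.continuous.tendsto 0).comp (hsel0 s hs)))
  have hkink : Tendsto (fun ε => ∫ u, a * (1 + u) * deriv (x ε) u ^ 2 * φ u) l
      (nhds ((1 / 4) * a * (deriv f x₀) ^ 2 * ∫ u in Ioi (0:ℝ), (1 + u) * φ u)) := by
    rw [← integral_const_mul, ← integral_indicator measurableSet_Ioi]
    refine tendsto_integral_filter_of_dominated_convergence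
      (fun u => |a * (1 + u) * φ u| * (K * C) ^ 2) ?_ ?_ ?_ ?_
    · filter_upwards [hmem] with ε hε
      have := hxc' ε hε
      have := hφ.continuous
      exact Continuous.aestronglyMeasurable (by fun_prop)
    · filter_upwards [hbounds] with ε hb
      refine ae_of_all _ fun u => ?_
      rw [Real.norm_eq_abs, show a * (1 + u) * deriv (x ε) u ^ 2 * φ u =
        a * (1 + u) * φ u * deriv (x ε) u ^ 2 by ring, abs_mul, abs_pow]
      gcongr
      exact hb.2.2.1 u
    · refine Integrable.mul_const (Integrable.abs ?_) _
      have := hφ.continuous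
      exact Continuous.integrable_of_hasCompactSupport (by fun_prop) hφc.mul_left
    · filter_upwards [compl_mem_ae_iff.2 (measure_singleton (0:ℝ))] with u hu
      rcases lt_or_gt_of_ne (show u ≠ 0 from hu) with h | h
      · rw [indicator_of_notMem (by simpa using h.le)]
        refine tendsto_const_nhds.congr' ?_
        filter_upwards [hbounds, hl0.eventually_lt_const (neg_pos.2 h)] with ε hb hεu
        rw [hb.1 u (by linarith)]
        ring
      · rw [indicator_of_mem (by exact h), show 1 / 4 * a * deriv f x₀ ^ 2 * ((1 + u) * φ u) =
          a * (1 + u) * (deriv f x₀ / 2) ^ 2 * φ u by ring]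
        refine (((hvel.pow 2).const_mul (a * (1 + u))).mul_const (φ u)).congr' ?_
        filter_upwards [hbounds, hl0.eventually_lt_const h] with ε hb hεu
        rw [hb.2.2.2 u hεu.le]
  have hsum := ((tendsto_const_nhds (x := b * ∫ u, (1 + u) * φ u)).add hpulse).add hkink
  refine hsum.congr' ?_
  filter_upwards [hmem] with ε hε
  obtain ⟨h1, h2, h3, h4⟩ := hx ε hε
  obtain ⟨⟨hNu, hNv, hNx, -⟩, hJ, ⟨hu0, hv0, hx0, -⟩, hu1, hv1, hx1, -⟩ := hN ε hε
  have hform := jacobi_Nv_eq hf (hsm ε (hsub hε)) (hcs ε hε) (hts ε hε) h1 h2 h4 hNu hNv hNx hJ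
    hu0 hv0 hx0 hu1 hv1 hx1
  have c1 := hφ.continuous
  have c2 := hxc ε hε
  have c3 := hxc' ε hε
  have c4 := hf.continuous
  have c5 := (hsm ε (hsub hε)).continuous
  have i1 : Integrable fun u => b * ((1 + u) * φ u) :=
    Continuous.integrable_of_hasCompactSupport (by fun_prop) hφc.mul_left.mul_left
  have i2 : Integrable fun u => ρ ε u * (a * (1 + u) * f (x ε u) * φ u) :=
    Continuous.integrable_of_hasCompactSupport (by fun_prop) hφc.mul_left.mul_left
  have i3 : Integrable fun u => a * (1 + u) * deriv (x ε) u ^ 2 * φ u :=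
    Continuous.integrable_of_hasCompactSupport (by fun_prop) hφc.mul_left
  rw [← integral_const_mul, ← integral_add i1 i2, ← integral_add (by exact i1.add i2) i3]
  refine integral_congr_ae (ae_of_all _ fun u => ?_)
  simp only [hform]
  ring
end
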